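/- arXiv:0709.4017 — 2 statements merged into one kernel-verified Lean document; each statement's English description precedes it below -/
import Mathlib

section
/- Let T = { x ∈ ℝⁿ : f₁(x) ≥ 0, …, fₘ(x) ≥ 0 } be a compact set defined by real polynomials fᵢ, and suppose T has nonempty interior near ∂_cT, i.e., for every u ∈ ∂_cT and every δ > 0 there exists v ∈ B(u, δ) with fᵢ(v) > 0 for all i = 1, …, m. If for every u ∈ ∂_cT and every index i with fᵢ(u) = 0, the polynomial fᵢ is either sos-concave or strictly quasi-concave at u, then conv(T) is SDP representable. -/
open MvPolynomial Metric Set Pointwise Filter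

noncomputable section

/-- `ℝⁿ` with the Euclidean norm. -/
abbrev Rn (n : ℕ) : Type := EuclideanSpace ℝ (Fin n)

/-- A set `S ⊆ ℝⁿ` is SDP representable if it is the projection of a spectrahedron:
there are symmetric matrices `A₀, A i, B j` with
`S = { x | ∃ u, A₀ + Σ xᵢ Aᵢ + Σ uⱼ Bⱼ ⪰ 0 }`. -/
def IsSDPRepresentable {n : ℕ} (S : Set (Rn n)) : Prop :=
  ∃ (N d : ℕ) (A₀ : Matrix (Fin d) (Fin d) ℝ)
    (A : Fin n → Matrix (Fin d) (Fin d) ℝ) (B : Fin N → Matrix (Fin d) (Fin d) ℝ),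
    A₀.IsSymm ∧ (∀ i, (A i).IsSymm) ∧ (∀ j, (B j).IsSymm) ∧
    S = {x : Rn n | ∃ u : Fin N → ℝ,
      (A₀ + ∑ i, x i • A i + ∑ j, u j • B j).PosSemidef}

/-- Evaluation of a polynomial at a point of `ℝⁿ`. -/
def peval {n : ℕ} (g : MvPolynomial (Fin n) ℝ) (x : Rn n) : ℝ :=
  MvPolynomial.eval (fun i => x i) g

/-- The gradient `∇g(u)` of a polynomial. -/
def pgrad {n : ℕ} (g : MvPolynomial (Fin n) ℝ) (u : Rn n) : Fin n → ℝ :=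
  fun i => MvPolynomial.eval (fun j => u j) (MvPolynomial.pderiv i g)

/-- The Hessian `∇²g(u)` of a polynomial. -/
def phess {n : ℕ} (g : MvPolynomial (Fin n) ℝ) (u : Rn n) : Matrix (Fin n) (Fin n) ℝ :=
  Matrix.of fun i j =>
    MvPolynomial.eval (fun k => u k) (MvPolynomial.pderiv i (MvPolynomial.pderiv j g))

/-- A polynomial `g` is sos-concave if `-∇²g(x) = W(x)ᵀ W(x)` for some
(possibly nonsquare) matrix polynomial `W`. -/
def SosConcave {n : ℕ} (g : MvPolynomial (Fin n) ℝ) : Prop :=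
  ∃ (k : ℕ) (W : Fin k → Fin n → MvPolynomial (Fin n) ℝ),
    ∀ i j, - MvPolynomial.pderiv i (MvPolynomial.pderiv j g) = ∑ l, W l i * W l j

/-- `g` is quasi-concave at `u` : `-vᵀ∇²g(u)v ≥ 0` for every `v` with `∇g(u)ᵀv = 0`. -/
def QuasiConcaveAt {n : ℕ} (g : MvPolynomial (Fin n) ℝ) (u : Rn n) : Prop :=
  ∀ v : Fin n → ℝ, (∑ i, pgrad g u i * v i) = 0 →
    0 ≤ -(∑ i, ∑ j, v i * phess g u i j * v j)

/-- `g` is strictly quasi-concave at `u` : if `∇g(u) ≠ 0` then `-vᵀ∇²g(u)v > 0`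
for all nonzero `v ⊥ ∇g(u)`; if `∇g(u) = 0` then `-∇²g(u)` is positive definite. -/
def StrictlyQuasiConcaveAt {n : ℕ} (g : MvPolynomial (Fin n) ℝ) (u : Rn n) : Prop :=
  (pgrad g u ≠ 0 ∧ ∀ v : Fin n → ℝ, v ≠ 0 → (∑ i, pgrad g u i * v i) = 0 →
      0 < -(∑ i, ∑ j, v i * phess g u i j * v j)) ∨
  (pgrad g u = 0 ∧ (-(phess g u)).PosDef)

/-- The convex boundary `∂_c T` : points of `T` minimizing some unit linear functional. -/
def convexBoundary {n : ℕ} (T : Set (Rn n)) : Set (Rn n) :=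
  {u ∈ T | ∃ l : Rn n, ‖l‖ = 1 ∧ ∀ x ∈ T, (∑ i, l i * u i) ≤ ∑ i, l i * x i}

/-- `v` is a nonsingular point of `∂T` (w.r.t. defining polynomials `g`):
exactly one defining polynomial vanishes at `v`, with nonvanishing gradient. -/
def IsNonsingularBoundaryPoint {n m : ℕ} (g : Fin m → MvPolynomial (Fin n) ℝ)
    (T : Set (Rn n)) (v : Rn n) : Prop :=
  v ∈ frontier T ∧ ∃ i, peval (g i) v = 0 ∧ pgrad (g i) v ≠ 0 ∧
    ∀ j, peval (g j) v = 0 → j = i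

/-- A polynomial is SOS if it is a finite sum of squares of polynomials. -/
def IsSOSPoly {n : ℕ} (p : MvPolynomial (Fin n) ℝ) : Prop :=
  ∃ (k : ℕ) (q : Fin k → MvPolynomial (Fin n) ℝ), p = ∑ i, (q i) ^ 2

/-- The polynomial `δ² - ‖x - u‖²`. -/
def ballPoly {n : ℕ} (u : Rn n) (δ : ℝ) : MvPolynomial (Fin n) ℝ :=
  MvPolynomial.C (δ ^ 2) - ∑ i, (MvPolynomial.X i - MvPolynomial.C (u i)) ^ 2

/-- The family `h₁, …, h_{m₂}` extended by the ball polynomial `h_m(x) = δ² - ‖x-u‖²`. -/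
def extFamily {n m2 : ℕ} (h : Fin m2 → MvPolynomial (Fin n) ℝ) (u : Rn n) (δ : ℝ) :
    Fin (m2 + 1) → MvPolynomial (Fin n) ℝ :=
  Fin.snoc h (ballPoly u δ)

/-- The positive definite Lagrange Hessian (PDLH) condition at `u` with radius `δu`,
for the set `T = {x | f(x) = 0, h(x) ≥ 0}`. -/
def PDLHAt {n m1 m2 : ℕ} (f : Fin m1 → MvPolynomial (Fin n) ℝ)
    (h : Fin m2 → MvPolynomial (Fin n) ℝ) (T : Set (Rn n)) (u : Rn n) (δu : ℝ) : Prop :=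
  ∀ l : Rn n, ‖l‖ = 1 → ∀ δ : ℝ, 0 < δ → δ ≤ δu →
    ∀ v ∈ T ∩ closedBall u δ,
      (∀ x ∈ T ∩ closedBall u δ, (∑ i, l i * v i) ≤ ∑ i, l i * x i) →
      ∃ (lam : Fin m1 → ℝ) (mu : Fin (m2 + 1) → ℝ),
        (∀ j, 0 ≤ mu j) ∧
        (∀ j, mu j * peval (extFamily h u δ j) v = 0) ∧
        (∀ i, l i = (∑ k, lam k * pgrad (f k) v i) +
            ∑ j, mu j * pgrad (extFamily h u δ j) v i) ∧
        ∀ x ∈ closedBall u δ,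
          (Matrix.of (fun i i' : Fin n =>
            -(∑ k, lam k * phess (f k) x i i') -
              ∑ j, mu j * phess (extFamily h u δ j) x i i')).PosDef

/-- `Z(g) ∩ ∂S` has strictly convex shape with respect to `S`. -/
def StrictlyConvexShape {n : ℕ} (g : MvPolynomial (Fin n) ℝ) (S : Set (Rn n)) : Prop :=
  ∃ Y U : Set (Rn n), IsOpen U ∧ Y = {x | peval g x = 0} ∩ U ∧
    {x | peval g x = 0} ∩ frontier S ⊆ Y ∧
    (∀ p ∈ closure Y, pgrad g p ≠ 0) ∧
    ∀ p ∈ closure Y,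
      (∃ ε : ℝ, (ε = 1 ∨ ε = -1) ∧
        ∀ q ∈ S ∪ closure Y, ε * (∑ i, pgrad g p i * (q i - p i)) ≤ 0) ∧
      ∀ q ∈ S ∪ closure Y, (∑ i, pgrad g p i * (q i - p i)) = 0 → q = p


/-! ### Part 1: linear matrix inequalities -/

/-- `P x v` is expressed by a linear matrix inequality. -/
def IsLMI {n : ℕ} {V : Type} [AddCommGroup V] [Module ℝ V] (P : Rn n → V → Prop) : Prop :=
  ∃ (ι : Type) (_ : Fintype ι) (A₀ : Matrix ι ι ℝ) (A : Fin n → Matrix ι ι ℝ)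
    (B : V →ₗ[ℝ] Matrix ι ι ℝ), A₀.IsSymm ∧ (∀ i, (A i).IsSymm) ∧ (∀ v, (B v).IsSymm) ∧
    ∀ x v, P x v ↔ (A₀ + ∑ i, x i • A i + B v).PosSemidef

lemma IsLMI.sdp {n : ℕ} {V : Type} [AddCommGroup V] [Module ℝ V] {P : Rn n → V → Prop}
    (h : IsLMI P) : IsSDPRepresentable {x | ∃ v, P x v} := by
  obtain ⟨ι, _, A₀, A, B, h0, hA, hB, hP⟩ := h
  let e := Fintype.equivFin ι
  let b := Module.finBasis ℝ (LinearMap.range B)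
  refine ⟨_, Fintype.card ι, A₀.submatrix e.symm e.symm,
    fun i => (A i).submatrix e.symm e.symm,
    fun j => (b j : Matrix ι ι ℝ).submatrix e.symm e.symm, h0.submatrix _,
    fun i => (hA i).submatrix _, fun j => ?_, ?_⟩
  · obtain ⟨v, hv⟩ := (b j).2
    have := (hB v).submatrix e.symm
    rw [hv] at this
    exact this
  have key : ∀ (x : Rn n) (u : Fin (Module.finrank ℝ (LinearMap.range B)) → ℝ),
      (A₀.submatrix e.symm e.symm + ∑ i, x i • (A i).submatrix e.symm e.symm +
        ∑ j, u j • (b j : Matrix ι ι ℝ).submatrix e.symm e.symm) =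
      (A₀ + ∑ i, x i • A i + ((∑ j, u j • b j : LinearMap.range B) : Matrix ι ι ℝ)).submatrix
        e.symm e.symm := by
    intro x u
    ext i j
    simp [Matrix.sum_apply]
  ext x
  simp only [Set.mem_ofPred_eq, key, Matrix.posSemidef_submatrix_equiv, hP]
  constructor
  · rintro ⟨v, hv⟩
    refine ⟨b.repr ⟨B v, v, rfl⟩, ?_⟩
    rw [b.sum_repr]; exact hv
  · rintro ⟨u, hu⟩
    obtain ⟨v, hv⟩ := (∑ j, u j • b j : LinearMap.range B).2
    exact ⟨v, by rw [hv]; exact hu⟩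

lemma posSemidef_fromBlocks_diag {ι κ : Type} [Fintype ι] [Fintype κ] (M : Matrix ι ι ℝ)
    (N : Matrix κ κ ℝ) :
    (Matrix.fromBlocks M 0 0 N).PosSemidef ↔ M.PosSemidef ∧ N.PosSemidef := by
  constructor
  · intro h
    exact ⟨h.submatrix Sum.inl, h.submatrix Sum.inr⟩
  · rintro ⟨h1, h2⟩
    rw [Matrix.posSemidef_iff_dotProduct_mulVec] at *
    refine ⟨Matrix.IsHermitian.fromBlocks h1.1 (by simp) h2.1, fun x => ?_⟩
    have := add_nonneg (h1.2 (x ∘ Sum.inl)) (h2.2 (x ∘ Sum.inr))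
    simpa [Matrix.fromBlocks_mulVec, dotProduct] using this

lemma IsLMI.and {n : ℕ} {V : Type} [AddCommGroup V] [Module ℝ V] {P Q : Rn n → V → Prop}
    (h : IsLMI P) (h' : IsLMI Q) : IsLMI (fun x v => P x v ∧ Q x v) := by
  obtain ⟨ι, _, A₀, A, B, h0, hA, hB, hP⟩ := h
  obtain ⟨κ, _, A₀', A', B', h0', hA', hB', hP'⟩ := h'
  refine ⟨ι ⊕ κ, inferInstance, Matrix.fromBlocks A₀ 0 0 A₀',
    fun i => Matrix.fromBlocks (A i) 0 0 (A' i),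
    { toFun := fun v => Matrix.fromBlocks (B v) 0 0 (B' v)
      map_add' := fun v w => by simp [Matrix.fromBlocks_add]
      map_smul' := fun c w => by simp [Matrix.fromBlocks_smul] }, ?_, ?_, ?_, ?_⟩
  · exact h0.fromBlocks (by simp) h0'
  · exact fun i => (hA i).fromBlocks (by simp) (hA' i)
  · exact fun v => (hB v).fromBlocks (by simp) (hB' v)
  · intro x v
    have : Matrix.fromBlocks A₀ 0 0 A₀' + ∑ i, x i • Matrix.fromBlocks (A i) 0 0 (A' i) +
        Matrix.fromBlocks (B v) 0 0 (B' v) =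
        Matrix.fromBlocks (A₀ + ∑ i, x i • A i + B v) 0 0 (A₀' + ∑ i, x i • A' i + B' v) := by
      ext i j
      rcases i with i | i <;> rcases j with j | j <;> simp [Matrix.sum_apply]
    simp only [LinearMap.coe_mk, AddHom.coe_mk]
    rw [this, posSemidef_fromBlocks_diag, hP, hP']

lemma IsLMI.congr {n : ℕ} {V : Type} [AddCommGroup V] [Module ℝ V] {P Q : Rn n → V → Prop}
    (h : IsLMI P) (h' : ∀ x v, Q x v ↔ P x v) : IsLMI Q := by
  have : Q = P := by funext x v; exact propext (h' x v)
  rwa [this]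

lemma posSemidef_unit (M : Matrix Unit Unit ℝ) : M.PosSemidef ↔ 0 ≤ M () () := by
  constructor
  · intro h; exact h.diag_nonneg
  · intro h
    have : M = Matrix.diagonal (fun _ => M () ()) := by ext i j; simp
    rw [this, Matrix.posSemidef_diagonal_iff]; exact fun _ => h

lemma IsLMI.linear {n : ℕ} {V : Type} [AddCommGroup V] [Module ℝ V] (c : ℝ) (a : Fin n → ℝ)
    (φ : V →ₗ[ℝ] ℝ) : IsLMI (fun (x : Rn n) v => 0 ≤ c + ∑ i, x i * a i + φ v) := by
  refine ⟨Unit, inferInstance, Matrix.of fun _ _ => c, fun i => Matrix.of fun _ _ => a i,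
    { toFun := fun v => Matrix.of fun _ _ => φ v
      map_add' := fun v w => by ext; simp
      map_smul' := fun c w => by ext; simp }, ?_, ?_, ?_, ?_⟩
  · rfl
  · intro; rfl
  · intro; rfl
  · intro x v
    rw [posSemidef_unit]
    simp [Matrix.sum_apply]

lemma IsLMI.true {n : ℕ} {V : Type} [AddCommGroup V] [Module ℝ V] :
    IsLMI (fun (_ : Rn n) (_ : V) => True) :=
  (IsLMI.linear 0 0 (0 : V →ₗ[ℝ] ℝ)).congr (by simp)

lemma IsLMI.forall {n : ℕ} {V : Type} [AddCommGroup V] [Module ℝ V] {κ : Type*} [Finite κ]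
    {P : κ → Rn n → V → Prop} (h : ∀ k, IsLMI (P k)) : IsLMI (fun x v => ∀ k, P k x v) := by
  classical
  cases nonempty_fintype κ
  have : ∀ s : Finset κ, IsLMI (fun x v => ∀ k ∈ s, P k x v) := by
    intro s
    induction s using Finset.induction_on with
    | empty => exact IsLMI.true.congr (by simp)
    | insert a s ha ih => exact ((h a).and ih).congr (by simp)
  exact (this Finset.univ).congr (by simp)

lemma IsLMI.linear_eq {n : ℕ} {V : Type} [AddCommGroup V] [Module ℝ V] (c : ℝ) (a : Fin n → ℝ)
    (φ : V →ₗ[ℝ] ℝ) : IsLMI (fun (x : Rn n) v => c + ∑ i, x i * a i + φ v = 0) := by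
  refine ((IsLMI.linear c a φ).and (IsLMI.linear (-c) (-a) (-φ))).congr ?_
  intro x v
  have : -c + ∑ i, x i * (-a) i + (-φ) v = -(c + ∑ i, x i * a i + φ v) := by
    simp; ring
  rw [this]
  constructor
  · intro h; rw [h]; simp
  · rintro ⟨h1, h2⟩; linarith

/-- pure matrix constraint -/
lemma IsLMI.matrix {n : ℕ} {V : Type} [AddCommGroup V] [Module ℝ V] {ι : Type} [Fintype ι]
    (B : V →ₗ[ℝ] Matrix ι ι ℝ) (hB : ∀ v, (B v).IsSymm) :
    IsLMI (fun (_ : Rn n) v => (B v).PosSemidef) := by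
  refine ⟨ι, inferInstance, 0, fun _ => 0, B, by simp, by simp, hB, ?_⟩
  intro x v
  simp

/-- nonnegativity of a functional on `q * p ^ 2`, `deg p ≤ D`, is an LMI. -/
lemma IsLMI.moment {n : ℕ} {V : Type} [AddCommGroup V] [Module ℝ V]
    (Φ : V →ₗ[ℝ] (MvPolynomial (Fin n) ℝ →ₗ[ℝ] ℝ)) (q : MvPolynomial (Fin n) ℝ) (D : ℕ) :
    IsLMI (fun (_ : Rn n) v => ∀ p : MvPolynomial (Fin n) ℝ, p.totalDegree ≤ D →
      0 ≤ Φ v (q * p ^ 2)) := by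
  classical
  have hfin : {a : Fin n →₀ ℕ | a.degree ≤ D}.Finite := by
    apply Finsupp.finite_of_degree_le
  have := hfin.fintype
  refine (IsLMI.matrix (ι := {a : Fin n →₀ ℕ | a.degree ≤ D})
    { toFun := fun v => Matrix.of fun a b => Φ v (q * (monomial a.1 1 * monomial b.1 1))
      map_add' := fun v w => by ext; simp
      map_smul' := fun c w => by ext; simp } ?_).congr ?_
  · intro v
    ext a b
    simp [add_comm]
  · intro x v
    simp only [LinearMap.coe_mk, AddHom.coe_mk]
    have key : ∀ c : {a : Fin n →₀ ℕ | a.degree ≤ D} → ℝ,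
        Φ v (q * (∑ a, c a • monomial a.1 1) ^ 2) = star c ⬝ᵥ
        (Matrix.of (fun a b : {a : Fin n →₀ ℕ | a.degree ≤ D} =>
          Φ v (q * (monomial a.1 1 * monomial b.1 1)))).mulVec c := by
      intro c
      rw [pow_two, Finset.sum_mul_sum]
      simp only [dotProduct, Matrix.mulVec, Finset.mul_sum, map_sum,
        Matrix.of_apply, star_trivial]
      refine Finset.sum_congr rfl fun a _ => Finset.sum_congr rfl fun b _ => ?_
      rw [smul_mul_smul_comm, mul_smul_comm, map_smul, smul_eq_mul]
      ring
    constructor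
    · intro h
      rw [Matrix.posSemidef_iff_dotProduct_mulVec]
      refine ⟨?_, fun c => ?_⟩
      · ext a b; simp [add_comm]
      · rw [← key]
        apply h
        apply MvPolynomial.totalDegree_finsetSum_le
        intro a _
        refine (totalDegree_smul_le _ _).trans ((totalDegree_monomial_le _ _).trans ?_)
        exact a.2
    · intro h p hp
      rw [Matrix.posSemidef_iff_dotProduct_mulVec] at h
      have h2 := h.2 (fun a => p.coeff a.1)
      rw [← key] at h2
      have hpe : p = ∑ a : {a : Fin n →₀ ℕ | a.degree ≤ D},
          coeff a.1 p • (monomial a.1 1 : MvPolynomial (Fin n) ℝ) := by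
        ext b
        simp only [coeff_sum, coeff_smul, coeff_monomial, smul_eq_mul, mul_ite, mul_one, mul_zero]
        by_cases hb : b.degree ≤ D
        · rw [Finset.sum_eq_single ⟨b, hb⟩]
          · simp
          · intro a _ ha
            rw [if_neg]
            rintro rfl
            exact ha rfl
          · simp
        · rw [Finset.sum_eq_zero]
          · by_contra hne
            exact hb ((le_totalDegree (mem_support_iff.2 hne)).trans hp)
          · intro a _
            rw [if_neg]
            rintro rfl
            exact hb a.2
      rw [hpe]
      exact h2

/-! ### Part 2: Jensen inequality for truncated moment functionals -/

/-- linear functionals on polynomials -/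
abbrev MFun (n : ℕ) : Type := MvPolynomial (Fin n) ℝ →ₗ[ℝ] ℝ

/-- nonnegativity on squares of polynomials of degree at most `D`, localized by `q` -/
def PosOn {n : ℕ} (q : MvPolynomial (Fin n) ℝ) (D : ℕ) (L : MFun n) : Prop :=
  ∀ p : MvPolynomial (Fin n) ℝ, p.totalDegree ≤ D → 0 ≤ L (q * p ^ 2)

lemma PosOn.mono {n : ℕ} {q : MvPolynomial (Fin n) ℝ} {D D' : ℕ} {L : MFun n}
    (h : PosOn q D' L) (hD : D ≤ D') : PosOn q D L := fun p hp => h p (hp.trans hD)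

lemma PosOn.sq {n : ℕ} {D : ℕ} {L : MFun n} (h : PosOn 1 D L) {p : MvPolynomial (Fin n) ℝ}
    (hp : p.totalDegree ≤ D) : 0 ≤ L (p ^ 2) := by simpa using h p hp

/-- the segment from `x` to the generic point -/
def wseg {n : ℕ} (x : Rn n) (s : ℝ) (k : Fin n) : MvPolynomial (Fin n) ℝ :=
  C (x k) + C s * (X k - C (x k))

lemma map_C_mul {n : ℕ} (L : MFun n) (c : ℝ) (p : MvPolynomial (Fin n) ℝ) :
    L (C c * p) = c * L p := by
  rw [C_mul', map_smul, smul_eq_mul]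

lemma wseg_hasDerivAt {n : ℕ} (L : MFun n) (x : Rn n) (p : MvPolynomial (Fin n) ℝ) :
    ∀ (q : MvPolynomial (Fin n) ℝ) (s : ℝ),
    HasDerivAt (fun s => L (q * aeval (wseg x s) p))
      (L (q * ∑ i, (X i - C (x i)) * aeval (wseg x s) (pderiv i p))) s := by
  induction p using MvPolynomial.induction_on with
  | C a => 
    intro q s
    simpa using hasDerivAt_const s _
  | add p₁ p₂ h₁ h₂ =>
    intro q s
    have := (h₁ q s).add (h₂ q s)
    simp only [map_add, mul_add, Finset.sum_add_distrib]
    exact this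
  | mul_X p k ih =>
    intro q s
    have h1 := (ih q s).const_mul (x k)
    have h2 := (hasDerivAt_id s).mul (ih (q * (X k - C (x k))) s)
    have h3 := h1.add h2
    refine (h3.congr_deriv ?_).congr_of_eventuallyEq (Filter.Eventually.of_forall fun t => ?_)
    · simp only [id, one_mul]
      rw [← map_C_mul, ← map_C_mul, ← map_add, ← map_add]
      congr 1
      simp only [pderiv_mul, map_add, map_mul, aeval_X, pderiv_X, mul_add, Finset.sum_add_distrib]
      have e1 : ∑ i, (X i - C (x i)) * (aeval (wseg x s) p *
          aeval (wseg x s) (Pi.single (M := fun _ => MvPolynomial (Fin n) ℝ) i 1 k)) =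
          (X k - C (x k)) * aeval (wseg x s) p := by
        rw [Finset.sum_eq_single k]
        · simp
        · intro b _ hb
          rw [Pi.single_eq_of_ne hb.symm]; simp
        · simp
      rw [e1]
      have e2 : ∑ i, (X i - C (x i)) * (aeval (wseg x s) (pderiv i p) * wseg x s k) =
          (∑ i, (X i - C (x i)) * aeval (wseg x s) (pderiv i p)) * wseg x s k := by
        rw [Finset.sum_mul]; exact Finset.sum_congr rfl fun i _ => by ring
      rw [e2]
      simp only [wseg]
      ring
    · simp only [Pi.add_apply, Pi.mul_apply, id]
      rw [← map_C_mul, ← map_C_mul, ← map_add]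
      congr 1
      simp only [map_mul, aeval_X, wseg]
      ring

lemma jensen {n : ℕ} (L : MFun n) (x : Rn n) (g : MvPolynomial (Fin n) ℝ) (h1 : L 1 = 1)
    (hX : ∀ i, L (X i) = x i)
    (hneg : ∀ s : ℝ, 0 ≤ s → s ≤ 1 → L (∑ i, ∑ j, (X i - C (x i)) * (X j - C (x j)) *
      aeval (wseg x s) (pderiv j (pderiv i g))) ≤ 0) : L g ≤ peval g x := by
  have hC : ∀ c : ℝ, L (C c) = c := by
    intro c
    have := map_C_mul L c 1
    simpa [h1] using this
  have hw0 : ∀ p, aeval (wseg x 0) p = C (peval p x) := by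
    intro p
    have : wseg x 0 = fun i => (C (x i) : MvPolynomial (Fin n) ℝ) := by
      funext k; simp [wseg]
    rw [this]
    unfold peval
    induction p using MvPolynomial.induction_on with
    | C a => simp
    | add p q hp hq => rw [map_add, hp, hq, map_add, map_add]
    | mul_X p i hp => rw [map_mul, hp, aeval_X, map_mul, eval_X, map_mul]
  have hw1 : aeval (wseg x 1) g = g := by
    have : wseg x 1 = X := by funext k; simp [wseg]
    rw [this, aeval_X_left_apply]
  let φ : ℝ → ℝ := fun s => L (aeval (wseg x s) g)
  let φ' : ℝ → ℝ := fun s => L (∑ i, (X i - C (x i)) * aeval (wseg x s) (pderiv i g))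
  have hφ : ∀ s, HasDerivAt φ (φ' s) s := fun s => by
    have := wseg_hasDerivAt L x g 1 s
    simp only [one_mul] at this
    exact this
  have hφ' : ∀ s, HasDerivAt φ' (L (∑ i, ∑ j, (X i - C (x i)) * (X j - C (x j)) *
      aeval (wseg x s) (pderiv j (pderiv i g)))) s := fun s => by
    have := HasDerivAt.fun_sum (u := Finset.univ)
      (fun i _ => wseg_hasDerivAt L x (pderiv i g) (X i - C (x i)) s)
    simp only [φ', map_sum]
    refine this.congr_deriv ?_
    refine Finset.sum_congr rfl fun i _ => ?_
    rw [Finset.mul_sum, map_sum]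
    exact Finset.sum_congr rfl fun j _ => by rw [mul_assoc]
  have anti' : AntitoneOn φ' (Set.Icc 0 1) := by
    apply antitoneOn_of_deriv_nonpos (convex_Icc 0 1)
    · exact fun s _ => (hφ' s).continuousAt.continuousWithinAt
    · exact fun s _ => (hφ' s).differentiableAt.differentiableWithinAt
    · intro s hs
      rw [interior_Icc] at hs
      rw [(hφ' s).deriv]
      exact hneg s hs.1.le hs.2.le
  have hφ'0 : φ' 0 = 0 := by
    simp only [φ', hw0, map_sum]
    refine Finset.sum_eq_zero fun i _ => ?_
    rw [mul_comm, map_C_mul, map_sub, hX, hC]; simp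
  have anti : AntitoneOn φ (Set.Icc 0 1) := by
    apply antitoneOn_of_deriv_nonpos (convex_Icc 0 1)
    · exact fun s _ => (hφ s).continuousAt.continuousWithinAt
    · exact fun s _ => (hφ s).differentiableAt.differentiableWithinAt
    · intro s hs
      rw [interior_Icc] at hs
      rw [(hφ s).deriv, ← hφ'0]
      exact anti' (by simp) ⟨hs.1.le, hs.2.le⟩ hs.1.le
  have := anti (a := 0) (b := 1) (by simp) (by simp) zero_le_one
  simp only [φ] at this
  rwa [hw0, hw1, hC] at this

lemma wseg_deg {n : ℕ} (x : Rn n) (s : ℝ) (k : Fin n) : (wseg x s k).totalDegree ≤ 1 := by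
  unfold wseg
  refine (totalDegree_add _ _).trans (max_le (by simp) ?_)
  refine (totalDegree_mul _ _).trans ?_
  simpa using (totalDegree_sub_C_le (X k : MvPolynomial (Fin n) ℝ) (x k))

lemma Z_deg {n : ℕ} (x : ℝ) (k : Fin n) :
    (X k - C x : MvPolynomial (Fin n) ℝ).totalDegree ≤ 1 := by
  simpa using (totalDegree_sub_C_le (X k : MvPolynomial (Fin n) ℝ) x)

lemma aeval_wseg_deg {n : ℕ} (e : MvPolynomial (Fin n) ℝ) :
    ∃ D : ℕ, ∀ (x : Rn n) (s : ℝ), (aeval (wseg x s) e).totalDegree ≤ D := by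
  induction e using MvPolynomial.induction_on with
  | C a => exact ⟨0, by simp⟩
  | add p q hp hq =>
    obtain ⟨D, hD⟩ := hp
    obtain ⟨D', hD'⟩ := hq
    refine ⟨D + D', fun x s => ?_⟩
    rw [map_add]
    refine (totalDegree_add _ _).trans (max_le ?_ ?_)
    · have := hD x s; omega
    · have := hD' x s; omega
  | mul_X p i hp =>
    obtain ⟨D, hD⟩ := hp
    refine ⟨D + 1, fun x s => ?_⟩
    rw [map_mul, aeval_X]
    exact (totalDegree_mul _ _).trans (add_le_add (hD x s) (wseg_deg x s i))

lemma sosConcave_jensen {n : ℕ} (f : MvPolynomial (Fin n) ℝ) (hf : SosConcave f) :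
    ∃ D : ℕ, ∀ (L : MFun n) (x : Rn n), PosOn 1 D L → L 1 = 1 → (∀ i, L (X i) = x i) →
      L f ≤ peval f x := by
  obtain ⟨k, W, hW⟩ := hf
  choose d hd using fun (li : Fin k × Fin n) => aeval_wseg_deg (W li.1 li.2)
  refine ⟨1 + Finset.univ.sup d, fun L x hL h1 hX => jensen L x f h1 hX fun s _ _ => ?_⟩
  have : (∑ i, ∑ j, (X i - C (x i)) * (X j - C (x j)) *
      aeval (wseg x s) (pderiv j (pderiv i f))) =
      - ∑ l, (∑ i, (X i - C (x i)) * aeval (wseg x s) (W l i)) ^ 2 := by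
    have e : ∀ i j, pderiv j (pderiv i f) = - ∑ l, W l j * W l i := fun i j => by
      rw [← hW]; simp
    have e2 : ∀ l, (∑ i, (X i - C (x i)) * aeval (wseg x s) (W l i)) ^ 2 =
        ∑ i, ∑ j, (X i - C (x i)) * aeval (wseg x s) (W l i) *
          ((X j - C (x j)) * aeval (wseg x s) (W l j)) := fun l => by
      rw [pow_two, Finset.sum_mul_sum]
    simp only [e2]
    rw [Finset.sum_comm (s := (Finset.univ : Finset (Fin k))), ← Finset.sum_neg_distrib]
    refine Finset.sum_congr rfl fun i _ => ?_
    rw [Finset.sum_comm (s := (Finset.univ : Finset (Fin k))), ← Finset.sum_neg_distrib]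
    refine Finset.sum_congr rfl fun j _ => ?_
    rw [e, map_neg, map_sum, mul_neg, Finset.mul_sum]
    refine congrArg Neg.neg (Finset.sum_congr rfl fun l _ => ?_)
    rw [map_mul]
    ring
  rw [this, map_neg, map_sum, neg_nonpos]
  refine Finset.sum_nonneg fun l _ => hL.sq ?_
  refine totalDegree_finsetSum_le fun i _ => (totalDegree_mul _ _).trans ?_
  refine add_le_add (Z_deg _ _) ((hd (l, i) x s).trans ?_)
  exact Finset.le_sup (f := d) (Finset.mem_univ (l, i))


/-! ### Part 3: strictly concave case -/

lemma two_sq_le {n : ℕ} {L : MFun n} {D : ℕ} (hL : PosOn 1 D L) (q a b : MvPolynomial (Fin n) ℝ)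
    (hd : (q * (a - b)).totalDegree ≤ D) :
    L (q ^ 2 * (a + b) ^ 2) ≤ 2 * L (q ^ 2 * a ^ 2) + 2 * L (q ^ 2 * b ^ 2) := by
  have h := hL.sq hd
  have e : (q * (a - b)) ^ 2 = C 2 * (q ^ 2 * a ^ 2) + C 2 * (q ^ 2 * b ^ 2)
      - q ^ 2 * (a + b) ^ 2 := by
    have : (C 2 : MvPolynomial (Fin n) ℝ) = 2 := map_ofNat C 2
    rw [this]; ring
  rw [e, map_sub, map_add, map_C_mul, map_C_mul] at h
  linarith

lemma coord_sq_le {n : ℕ} {L : MFun n} {D : ℕ} {u : Rn n} {δ : ℝ} (hL : PosOn 1 (D + 1) L)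
    (hB : PosOn (ballPoly u δ) D L) (k : Fin n) (p : MvPolynomial (Fin n) ℝ)
    (hp : p.totalDegree ≤ D) : L (p ^ 2 * (X k - C (u k)) ^ 2) ≤ δ ^ 2 * L (p ^ 2) := by
  have h := hB p hp
  have e : ballPoly u δ * p ^ 2 = C (δ ^ 2) * p ^ 2 - ∑ i, (p * (X i - C (u i))) ^ 2 := by
    have hs : ∀ i, (p * (X i - C (u i))) ^ 2 = (X i - C (u i)) ^ 2 * p ^ 2 := fun i => by ring
    simp only [hs, ballPoly, sub_mul, Finset.sum_mul]
  rw [e, map_sub, map_C_mul, map_sum] at h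
  have h2 : L ((p * (X k - C (u k))) ^ 2) ≤ ∑ i, L ((p * (X i - C (u i))) ^ 2) := by
    refine Finset.single_le_sum (f := fun i => L ((p * (X i - C (u i))) ^ 2))
      (fun i _ => hL.sq ?_) (Finset.mem_univ k)
    exact (totalDegree_mul _ _).trans (add_le_add hp (Z_deg _ _))
  rw [mul_pow] at h2
  linarith

lemma mean_in_ball {n : ℕ} {L : MFun n} {D : ℕ} {u x : Rn n} {δ : ℝ} (hδ : 0 ≤ δ)
    (hL : PosOn 1 (D + 1) L)
    (hB : PosOn (ballPoly u δ) D L) (h1 : L 1 = 1) (hX : ∀ i, L (X i) = x i) :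
    x ∈ closedBall u δ := by
  have h := hB 1 (by simp)
  have hC : ∀ c : ℝ, L (C c) = c := by
    intro c
    have := map_C_mul L c 1
    simpa [h1] using this
  have h3 : ∀ i, (x i - u i) ^ 2 ≤ L ((X i - C (u i)) ^ 2) := by
    intro i
    have h4 := hL.sq ((Z_deg (x i) i).trans (by omega))
    have e : (X i - C (u i) : MvPolynomial (Fin n) ℝ) ^ 2 = (X i - C (x i)) ^ 2 +
      C (2 * (x i - u i)) * X i + C (u i ^ 2 - x i ^ 2) := by
      simp only [map_mul, map_sub, map_pow, map_ofNat]
      ring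
    rw [e, map_add, map_add, map_C_mul, hX, hC]
    nlinarith
  rw [mem_closedBall, EuclideanSpace.dist_eq]
  apply Real.sqrt_le_iff.2 ⟨hδ, ?_⟩
  simp only [ballPoly, one_pow, mul_one, map_sub, hC, map_sum] at h
  calc ∑ i, dist (x i) (u i) ^ 2 = ∑ i, (x i - u i) ^ 2 := by simp [Real.dist_eq, sq_abs]
    _ ≤ ∑ i, L ((X i - C (u i)) ^ 2) := Finset.sum_le_sum fun i _ => h3 i
    _ ≤ δ ^ 2 := by linarith

lemma wcoord_sq_le {n : ℕ} {L : MFun n} {D : ℕ} {u x : Rn n} {δ s : ℝ} (hL : PosOn 1 (D + 1) L)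
    (hB : PosOn (ballPoly u δ) D L) (hs0 : 0 ≤ s) (hs1 : s ≤ 1) (k : Fin n)
    (hx : (x k - u k) ^ 2 ≤ δ ^ 2) (p : MvPolynomial (Fin n) ℝ)
    (hp : p.totalDegree ≤ D) :
    L (p ^ 2 * (wseg x s k - C (u k)) ^ 2) ≤ δ ^ 2 * L (p ^ 2) := by
  have h1 := coord_sq_le hL hB k p hp
  have h2 : 0 ≤ L ((p * (X k - C (x k))) ^ 2) :=
    hL.sq ((totalDegree_mul _ _).trans (add_le_add hp (Z_deg _ _)))
  have h3 : 0 ≤ L (p ^ 2) := hL.sq (by omega)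
  have e : p ^ 2 * (wseg x s k - C (u k)) ^ 2 = C ((1 - s) * (x k - u k) ^ 2) * p ^ 2 +
      C s * (p ^ 2 * (X k - C (u k)) ^ 2) - C (s * (1 - s)) * (p * (X k - C (x k))) ^ 2 := by
    simp only [wseg, map_mul, map_sub, map_pow, map_one]
    ring
  rw [e, map_sub, map_add, map_C_mul, map_C_mul, map_C_mul]
  have h4 : 0 ≤ s * (1 - s) * L ((p * (X k - C (x k))) ^ 2) :=
    mul_nonneg (mul_nonneg hs0 (by linarith)) h2
  have h5 := mul_le_mul_of_nonneg_left h1 hs0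
  have h6 : (1 - s) * (x k - u k) ^ 2 * L (p ^ 2) ≤ (1 - s) * δ ^ 2 * L (p ^ 2) := by
    gcongr
  linarith

lemma perturb_bound {n : ℕ} (u : Rn n) (e : MvPolynomial (Fin n) ℝ) :
    ∃ K : ℝ, 0 ≤ K ∧ ∃ D : ℕ, ∀ (d : ℕ) (δ s : ℝ) (L : MFun n) (x : Rn n), 0 < δ → δ ≤ 1 →
      0 ≤ s → s ≤ 1 → PosOn 1 (d + D) L → PosOn (ballPoly u δ) (d + D) L →
      (∀ k, (x k - u k) ^ 2 ≤ δ ^ 2) → ∀ q : MvPolynomial (Fin n) ℝ, q.totalDegree ≤ d →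
      L (q ^ 2 * (aeval (wseg x s) e - C (peval e u)) ^ 2) ≤ K * δ ^ 2 * L (q ^ 2) := by
  induction e using MvPolynomial.induction_on with
  | C a =>
    refine ⟨0, le_rfl, 0, ?_⟩
    intros
    simp [peval]
  | add p₁ p₂ h₁ h₂ =>
    obtain ⟨K₁, hK₁, D₁, h₁⟩ := h₁
    obtain ⟨K₂, hK₂, D₂, h₂⟩ := h₂
    obtain ⟨E₁, hE₁⟩ := aeval_wseg_deg p₁
    obtain ⟨E₂, hE₂⟩ := aeval_wseg_deg p₂
    refine ⟨2 * K₁ + 2 * K₂, by positivity, D₁ + D₂ + E₁ + E₂, ?_⟩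
    intro d δ s L x hδ hδ1 hs0 hs1 hL hB hx q hq
    have a1 := h₁ d δ s L x hδ hδ1 hs0 hs1 (hL.mono (by omega)) (hB.mono (by omega)) hx q hq
    have a2 := h₂ d δ s L x hδ hδ1 hs0 hs1 (hL.mono (by omega)) (hB.mono (by omega)) hx q hq
    have e : aeval (wseg x s) (p₁ + p₂) - C (peval (p₁ + p₂) u) =
        (aeval (wseg x s) p₁ - C (peval p₁ u)) + (aeval (wseg x s) p₂ - C (peval p₂ u)) := by
      simp only [peval, map_add]; ring
    rw [e]
    refine (two_sq_le hL q _ _ ?_).trans (by linarith)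
    have b1 := totalDegree_sub_C_le (aeval (wseg x s) p₁) (peval p₁ u)
    have b2 := totalDegree_sub_C_le (aeval (wseg x s) p₂) (peval p₂ u)
    have b3 := hE₁ x s
    have b4 := hE₂ x s
    refine (totalDegree_mul _ _).trans ?_
    have b5 := totalDegree_sub (aeval (wseg x s) p₁ - C (peval p₁ u))
      (aeval (wseg x s) p₂ - C (peval p₂ u))
    have b6 := b5.trans (max_le_add_of_nonneg (by positivity) (by positivity))
    omega
  | mul_X p k h =>
    obtain ⟨K, hK, D, h⟩ := h
    obtain ⟨E, hE⟩ := aeval_wseg_deg p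
    refine ⟨4 * K + 4 * u k ^ 2 * K + 2 * peval p u ^ 2, by positivity, D + E + 2, ?_⟩
    intro d δ s L x hδ hδ1 hs0 hs1 hL hB hx q hq
    have a1 := h d δ s L x hδ hδ1 hs0 hs1 (hL.mono (by omega)) (hB.mono (by omega)) hx q hq
    set P := aeval (wseg x s) p - C (peval p u) with hP
    set Y := wseg x s k - C (u k) with hY
    have dP : P.totalDegree ≤ E := (totalDegree_sub_C_le _ _).trans (hE x s)
    have dY : Y.totalDegree ≤ 1 := (totalDegree_sub_C_le _ _).trans (wseg_deg x s k)
    have dqP : (q * P).totalDegree ≤ d + E :=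
      (totalDegree_mul _ _).trans (add_le_add hq dP)
    have hδ2 : δ ^ 2 ≤ 1 := by nlinarith
    have n1 : 0 ≤ L (q ^ 2) := hL.sq (by omega)
    have n2 : 0 ≤ L ((q * P) ^ 2) := hL.sq (by omega)
    have e : aeval (wseg x s) (p * X k) - C (peval (p * X k) u) =
        (P * Y + C (u k) * P) + C (peval p u) * Y := by
      simp only [hP, hY, peval, map_mul, aeval_X, eval_X]; ring
    have hlin : ∀ (c : ℝ) (R : MvPolynomial (Fin n) ℝ),
        L (q ^ 2 * (C c * R) ^ 2) = c ^ 2 * L (q ^ 2 * R ^ 2) := by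
      intro c R
      rw [← map_C_mul]; congr 1; rw [map_pow]; ring
    have s1 := two_sq_le hL q (P * Y + C (u k) * P) (C (peval p u) * Y) (by
      have t1 : (q * (P * Y + C (u k) * P - C (peval p u) * Y)) =
        (q * P) * (Y + C (u k)) - q * (C (peval p u) * Y) := by ring
      rw [t1]
      refine (totalDegree_sub _ _).trans (max_le ?_ ?_)
      · refine (totalDegree_mul _ _).trans ?_
        have : (Y + C (u k)).totalDegree ≤ 1 := by
          rw [hY, sub_add_cancel]; exact wseg_deg x s k
        omega
      · refine (totalDegree_mul _ _).trans ?_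
        have := totalDegree_mul (C (peval p u)) Y
        rw [totalDegree_C] at this
        omega)
    have s2 := two_sq_le hL q (P * Y) (C (u k) * P) (by
      have t1 : q * (P * Y - C (u k) * P) = (q * P) * (Y - C (u k)) := by ring
      rw [t1]
      refine (totalDegree_mul _ _).trans ?_
      have := totalDegree_sub_C_le Y (u k)
      omega)
    have s3 : L (q ^ 2 * (P * Y) ^ 2) ≤ δ ^ 2 * L ((q * P) ^ 2) := by
      have := wcoord_sq_le (D := d + E) (hL.mono (by omega)) (hB.mono (by omega)) hs0 hs1 k (hx k)
        (q * P) dqP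
      rwa [show q ^ 2 * (P * Y) ^ 2 = (q * P) ^ 2 * Y ^ 2 by ring]
    have s4 : L (q ^ 2 * Y ^ 2) ≤ δ ^ 2 * L (q ^ 2) :=
      wcoord_sq_le (D := d) (hL.mono (by omega)) (hB.mono (by omega)) hs0 hs1 k (hx k) q hq
    rw [hlin] at s1 s2
    rw [e]
    have ePP : q ^ 2 * P ^ 2 = (q * P) ^ 2 := by ring
    rw [ePP] at a1 s2
    have s5 : δ ^ 2 * L ((q * P) ^ 2) ≤ L ((q * P) ^ 2) := by nlinarith
    have s6 := mul_le_mul_of_nonneg_left a1 (sq_nonneg (u k))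
    have s7 := mul_le_mul_of_nonneg_left s4 (sq_nonneg (peval p u))
    linarith

lemma quad_form {n : ℕ} {L : MFun n} {D : ℕ} (hL : PosOn 1 (D + 1) L) (x : Rn n)
    (Q : Fin n → Fin n → ℝ) (hQ : ∀ v : Fin n → ℝ, 0 ≤ ∑ i, ∑ j, v i * v j * Q i j) :
    0 ≤ ∑ i, ∑ j, Q i j * L ((X i - C (x i)) * (X j - C (x j))) := by
  let Q' : Matrix (Fin n) (Fin n) ℝ := Matrix.of fun i j => Q i j + Q j i
  let G : Matrix (Fin n) (Fin n) ℝ := Matrix.of fun i j => L ((X i - C (x i)) * (X j - C (x j)))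
  have hsw : ∀ (F : Fin n → Fin n → ℝ), ∑ i, ∑ j, F j i = ∑ i, ∑ j, F i j :=
    fun F => Finset.sum_comm
  have hQ' : Q'.PosSemidef := by
    rw [Matrix.posSemidef_iff_dotProduct_mulVec]
    refine ⟨?_, fun v => ?_⟩
    · ext i j; simp [Q', add_comm]
    · have e : star v ⬝ᵥ Q'.mulVec v = 2 * ∑ i, ∑ j, v i * v j * Q i j := by
        rw [two_mul]
        nth_rewrite 2 [← hsw]
        simp only [dotProduct, Matrix.mulVec, Q', Matrix.of_apply, star_trivial, Finset.mul_sum,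
          ← Finset.sum_add_distrib]
        exact Finset.sum_congr rfl fun i _ => Finset.sum_congr rfl fun j _ => by ring
      rw [e]
      have := hQ v
      positivity
  have hG : G.PosSemidef := by
    rw [Matrix.posSemidef_iff_dotProduct_mulVec]
    refine ⟨?_, fun v => ?_⟩
    · ext i j; simp [G, mul_comm]
    · have e : star v ⬝ᵥ G.mulVec v = L ((∑ i, C (v i) * (X i - C (x i))) ^ 2) := by
        rw [pow_two, Finset.sum_mul_sum]
        simp only [dotProduct, Matrix.mulVec, G, Matrix.of_apply, star_trivial, Finset.mul_sum,
          map_sum]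
        refine Finset.sum_congr rfl fun i _ => Finset.sum_congr rfl fun j _ => ?_
        rw [show C (v i) * (X i - C (x i)) * (C (v j) * (X j - C (x j))) =
          C (v i) * (C (v j) * ((X i - C (x i)) * (X j - C (x j)))) by ring, map_C_mul, map_C_mul]
        ring
      rw [e]
      refine hL.sq (totalDegree_finsetSum_le fun i _ => (totalDegree_mul _ _).trans ?_)
      have := Z_deg (x i) i
      rw [totalDegree_C]
      omega
  have h := (Matrix.posSemidef_iff_dotProduct_mulVec.1 (hQ'.hadamard hG)).2 (fun _ => 1)
  have e : star (fun _ => (1 : ℝ)) ⬝ᵥ (Matrix.hadamard Q' G).mulVec (fun _ => 1) =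
      2 * ∑ i, ∑ j, Q i j * L ((X i - C (x i)) * (X j - C (x j))) := by
    rw [two_mul]
    nth_rewrite 2 [← hsw]
    simp only [dotProduct, Matrix.mulVec, Q', G, Matrix.of_apply, star_trivial, Finset.mul_sum,
          ← Finset.sum_add_distrib, Matrix.hadamard_apply, one_mul, mul_one]
    refine Finset.sum_congr rfl fun i _ => Finset.sum_congr rfl fun j _ => ?_
    rw [mul_comm (X j - C (x j) : MvPolynomial (Fin n) ℝ)]; ring
  rw [e] at h
  linarith

lemma strict_jensen {n : ℕ} (g : MvPolynomial (Fin n) ℝ) (u : Rn n) (μ : ℝ) (hμ : 0 < μ)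
    (hH : ∀ v : Fin n → ℝ, μ * ∑ i, v i ^ 2 ≤
      - ∑ i, ∑ j, v i * v j * peval (pderiv j (pderiv i g)) u) :
    ∃ δ₀ > 0, ∃ D : ℕ, ∀ δ, 0 < δ → δ ≤ δ₀ → ∀ (L : MFun n) (x : Rn n), PosOn 1 D L →
      PosOn (ballPoly u δ) D L → L 1 = 1 → (∀ i, L (X i) = x i) → L g ≤ peval g x := by
  choose K hK D hD using fun ij : Fin n × Fin n =>
    perturb_bound u (pderiv ij.2 (pderiv ij.1 g))
  choose E hE using fun ij : Fin n × Fin n => aeval_wseg_deg (pderiv ij.2 (pderiv ij.1 g))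
  let KK : ℝ := ∑ ij, (1 + K ij)
  have hKK : 0 ≤ KK := Finset.sum_nonneg fun ij _ => by have := hK ij; positivity
  refine ⟨min 1 (μ / (KK + 1)), by positivity, Finset.univ.sup D + Finset.univ.sup E + 2, ?_⟩
  intro δ hδ hδ0 L x hL hB h1 hX
  have hδ1 : δ ≤ 1 := hδ0.trans (min_le_left _ _)
  have hδ2 : δ * KK ≤ μ := by
    have : δ ≤ μ / (KK + 1) := hδ0.trans (min_le_right _ _)
    rw [le_div_iff₀ (by positivity)] at this
    nlinarith
  have hball := mean_in_ball (D := 0) hδ.le (hL.mono (by omega)) (hB.mono (by omega)) h1 hX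
  have hx : ∀ k, (x k - u k) ^ 2 ≤ δ ^ 2 := by
    intro k
    rw [mem_closedBall, dist_eq_norm] at hball
    have h2 := (PiLp.norm_apply_le (x - u) k).trans hball
    rw [Real.norm_eq_abs] at h2
    have h3 : (x - u) k = x k - u k := rfl
    rw [h3] at h2
    exact sq_le_sq' (by linarith [neg_abs_le (x k - u k)]) (by linarith [le_abs_self (x k - u k)])
  refine jensen L x g h1 hX fun s hs0 hs1 => ?_
  let Z : Fin n → MvPolynomial (Fin n) ℝ := fun i => X i - C (x i)
  let N : ℝ := ∑ i, L (Z i ^ 2)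
  have hZ : ∀ i, 0 ≤ L (Z i ^ 2) := fun i => hL.sq ((Z_deg _ _).trans (by omega))
  have hN : ∀ i, L (Z i ^ 2) ≤ N := fun i =>
    Finset.single_le_sum (f := fun i => L (Z i ^ 2)) (fun i _ => hZ i) (Finset.mem_univ i)
  have hN0 : 0 ≤ N := Finset.sum_nonneg fun i _ => hZ i
  -- quadratic part
  have hquad := quad_form (D := 0) (hL.mono (by omega)) x
    (fun i j => - peval (pderiv j (pderiv i g)) u - if i = j then μ else 0) (by
      intro v
      have := hH v
      have e : ∑ i, ∑ j, v i * v j * (- peval (pderiv j (pderiv i g)) u - if i = j then μ else 0) =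
        - (∑ i, ∑ j, v i * v j * peval (pderiv j (pderiv i g)) u) - μ * ∑ i, v i ^ 2 := by
        simp only [mul_sub, Finset.sum_sub_distrib, mul_neg, Finset.sum_neg_distrib, mul_ite,
          mul_zero, Finset.sum_ite_eq, Finset.mem_univ, if_true, Finset.mul_sum]
        congr 1
        exact Finset.sum_congr rfl fun i _ => by ring
      rw [e]; linarith)
  have hquad' : μ * N ≤ - ∑ i, ∑ j, peval (pderiv j (pderiv i g)) u * L (Z i * Z j) := by
    have e : ∑ i, ∑ j, (- peval (pderiv j (pderiv i g)) u - if i = j then μ else 0) *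
        L ((X i - C (x i)) * (X j - C (x j))) =
        - (∑ i, ∑ j, peval (pderiv j (pderiv i g)) u * L (Z i * Z j)) - μ * N := by
      simp only [sub_mul, Finset.sum_sub_distrib, neg_mul, Finset.sum_neg_distrib, ite_mul,
        zero_mul, Finset.sum_ite_eq, Finset.mem_univ, if_true, Finset.mul_sum, N, Z, pow_two]
    rw [e] at hquad
    linarith
  -- perturbation
  have hpert : ∀ i j, L (Z i * Z j * (aeval (wseg x s) (pderiv j (pderiv i g)) -
      C (peval (pderiv j (pderiv i g)) u))) ≤ δ * (1 + K (i, j)) * N := by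
    intro i j
    set e := aeval (wseg x s) (pderiv j (pderiv i g)) - C (peval (pderiv j (pderiv i g)) u) with he
    have hDle : D (i, j) ≤ Finset.univ.sup D := Finset.le_sup (Finset.mem_univ (i, j))
    have hEle : E (i, j) ≤ Finset.univ.sup E := Finset.le_sup (Finset.mem_univ (i, j))
    have a1 := hD (i, j) 1 δ s L x hδ hδ1 hs0 hs1 (hL.mono (by omega)) (hB.mono (by omega)) hx
      (Z j) (Z_deg _ _)
    have hdeg : (C δ * Z i - Z j * e).totalDegree ≤
        Finset.univ.sup D + Finset.univ.sup E + 2 := by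
      have c1 := hE (i, j) x s
      have c2 := totalDegree_sub_C_le (aeval (wseg x s) (pderiv j (pderiv i g)))
        (peval (pderiv j (pderiv i g)) u)
      rw [← he] at c2
      have c3 : (Z i).totalDegree ≤ 1 := Z_deg _ _
      have c4 : (Z j).totalDegree ≤ 1 := Z_deg _ _
      refine (totalDegree_sub _ _).trans (max_le ?_ ?_)
      · refine (totalDegree_mul _ _).trans ?_
        rw [totalDegree_C]; omega
      · refine (totalDegree_mul _ _).trans ?_
        simp only at c1
        omega
    have a2 := hL.sq hdeg
    have e2 : (C δ * Z i - Z j * e) ^ 2 = C (δ ^ 2) * Z i ^ 2 - C (2 * δ) * (Z i * Z j * e) +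
        Z j ^ 2 * e ^ 2 := by
      simp only [map_mul, map_pow, map_ofNat]; ring
    rw [e2, map_add, map_sub, map_C_mul, map_C_mul] at a2
    have b1 := hN i
    have b2 := hN j
    have b3 : K (i, j) * δ ^ 2 * L (Z j ^ 2) ≤ K (i, j) * δ ^ 2 * N := by
      have := hK (i, j); gcongr
    have b4 : δ ^ 2 * L (Z i ^ 2) ≤ δ ^ 2 * N := by gcongr
    have b5 : δ * (2 * L (Z i * Z j * e)) ≤ δ * (δ * (1 + K (i, j)) * N) := by
      simp only at a1
      nlinarith
    have b6 := le_of_mul_le_mul_left b5 hδ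
    have : 0 ≤ δ * (1 + K (i, j)) * N := by have := hK (i, j); positivity
    linarith
  have hsum : L (∑ i, ∑ j, (X i - C (x i)) * (X j - C (x j)) *
      aeval (wseg x s) (pderiv j (pderiv i g))) =
      (∑ i, ∑ j, peval (pderiv j (pderiv i g)) u * L (Z i * Z j)) +
      ∑ i, ∑ j, L (Z i * Z j * (aeval (wseg x s) (pderiv j (pderiv i g)) -
      C (peval (pderiv j (pderiv i g)) u))) := by
    simp only [map_sum, ← Finset.sum_add_distrib]
    refine Finset.sum_congr rfl fun i _ => Finset.sum_congr rfl fun j _ => ?_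
    rw [← map_C_mul, ← map_add]
    congr 1
    simp only [Z]; ring
  have hpsum : ∑ i, ∑ j, L (Z i * Z j * (aeval (wseg x s) (pderiv j (pderiv i g)) -
      C (peval (pderiv j (pderiv i g)) u))) ≤ δ * KK * N := by
    refine (Finset.sum_le_sum fun i _ => Finset.sum_le_sum fun j _ => hpert i j).trans ?_
    simp only [KK, Fintype.sum_prod_type, Finset.mul_sum, Finset.sum_mul]
    exact le_rfl
  rw [hsum]
  have := mul_le_mul_of_nonneg_right hδ2 hN0
  linarith


/-! ### Part 4: local description -/

lemma peval_continuous {n : ℕ} (g : MvPolynomial (Fin n) ℝ) : Continuous (peval g) := by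
  unfold peval
  exact (MvPolynomial.continuous_eval g).comp (by fun_prop)

lemma finsler {n : ℕ} (G : Fin n → ℝ) (H : Fin n → Fin n → ℝ)
    (h : ∀ v : Fin n → ℝ, v ≠ 0 → (∑ i, G i * v i) = 0 → 0 < -(∑ i, ∑ j, v i * H i j * v j)) :
    ∃ M : ℝ, 0 ≤ M ∧ ∃ μ > 0, ∀ v : Fin n → ℝ,
      μ * ∑ i, v i ^ 2 ≤ -(∑ i, ∑ j, v i * H i j * v j) + M * (∑ i, G i * v i) ^ 2 := by
  let q : (Fin n → ℝ) → ℝ := fun v => -(∑ i, ∑ j, v i * H i j * v j)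
  let l : (Fin n → ℝ) → ℝ := fun v => (∑ i, G i * v i) ^ 2
  have hq : Continuous q := by simp only [q]; fun_prop
  have hl : Continuous l := by simp only [l]; fun_prop
  let S : Set (Fin n → ℝ) := {v | ∑ i, v i ^ 2 = 1}
  have hS : IsCompact S := by
    refine (isCompact_closedBall (0 : Fin n → ℝ) 1).of_isClosed_subset
      (isClosed_eq (by fun_prop) continuous_const) ?_
    intro v hv
    rw [mem_closedBall, dist_zero_right, pi_norm_le_iff_of_nonneg zero_le_one]
    intro i
    have h1 : v i ^ 2 ≤ ∑ i, v i ^ 2 :=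
      Finset.single_le_sum (f := fun i => v i ^ 2) (fun i _ => sq_nonneg _) (Finset.mem_univ i)
    rw [show ∑ i, v i ^ 2 = 1 from hv] at h1
    rw [Real.norm_eq_abs]
    exact (sq_le_one_iff_abs_le_one _).1 h1
  have hne : ∀ v ∈ S, v ≠ 0 := by
    rintro v hv rfl
    simp [S] at hv
  have hl0 : ∀ v, 0 ≤ l v := fun v => sq_nonneg _
  have hK : IsCompact (S ∩ {v | q v ≤ 0}) := hS.inter_right (isClosed_le hq continuous_const)
  obtain ⟨c, hc, hcl⟩ := hK.exists_forall_le' hl.continuousOn (a := 0) (by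
    rintro v ⟨hv, hqv⟩
    rcases (hl0 v).lt_or_eq with h' | h'
    · exact h'
    · exact absurd (h v (hne v hv) (pow_eq_zero_iff (two_ne_zero) |>.1 h'.symm)) (not_lt.2 hqv))
  obtain ⟨B, hB⟩ := hS.exists_bound_of_continuousOn hq.continuousOn
  let M := (|B| + 1) / c
  have hM : 0 ≤ M := by positivity
  obtain ⟨μ, hμ, hmin⟩ := hS.exists_forall_le' (f := fun v => q v + M * l v)
    (by fun_prop) (a := 0) (by
    intro v hv
    by_cases hqv : q v ≤ 0
    · have h1 := hcl v ⟨hv, hqv⟩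
      have h2 : M * c = |B| + 1 := div_mul_cancel₀ _ hc.ne'
      have h3 := mul_le_mul_of_nonneg_left h1 hM
      have h4 := hB v hv
      rw [Real.norm_eq_abs] at h4
      have h5 := neg_abs_le (q v)
      have h6 := le_abs_self B
      change 0 < q v + M * l v
      linarith
    · have h1 := mul_nonneg hM (hl0 v)
      change 0 < q v + M * l v
      linarith [not_le.1 hqv])
  refine ⟨M, hM, μ, hμ, fun v => ?_⟩
  by_cases hv : v = 0
  · subst hv; simp
  have hN : 0 < ∑ i, v i ^ 2 := by
    obtain ⟨i, hi⟩ := Function.ne_iff.1 hv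
    exact Finset.sum_pos' (fun i _ => sq_nonneg _) ⟨i, Finset.mem_univ i, by
      have : v i ≠ 0 := hi
      positivity⟩
  set N := ∑ i, v i ^ 2 with hNdef
  let r := (Real.sqrt N)⁻¹
  have hr : r ^ 2 * N = 1 := by
    simp only [r, inv_pow, Real.sq_sqrt hN.le]
    exact inv_mul_cancel₀ hN.ne'
  have hr0 : 0 < r ^ 2 := by
    have : 0 < r := by positivity
    positivity
  have h1 := hmin (fun i => r * v i) (by
    change ∑ i, (r * v i) ^ 2 = 1
    simp only [mul_pow, ← Finset.mul_sum]; exact hr)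
  have e1 : q (fun i => r * v i) = r ^ 2 * q v := by
    simp only [q, mul_neg, Finset.mul_sum]
    congr 1
    exact Finset.sum_congr rfl fun i _ => Finset.sum_congr rfl fun j _ => by ring
  have e2 : l (fun i => r * v i) = r ^ 2 * l v := by
    simp only [l]
    rw [← mul_pow, Finset.mul_sum]
    congr 1
    exact Finset.sum_congr rfl fun i _ => by ring
  rw [e1, e2] at h1
  refine le_of_mul_le_mul_left (a := r ^ 2) ?_ hr0
  change r ^ 2 * (μ * N) ≤ r ^ 2 * (q v + M * l v)
  calc r ^ 2 * (μ * N) = μ * (r ^ 2 * N) := by ring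
    _ = μ := by rw [hr, mul_one]
    _ ≤ _ := by linarith

/-- The properties of the replacement `g` of a constraint `f`. -/
def Good {n : ℕ} (f : MvPolynomial (Fin n) ℝ) (u : Rn n) (g : MvPolynomial (Fin n) ℝ)
    (D : ℕ) (δ : ℝ) : Prop :=
  (∀ x ∈ closedBall u δ, (0 ≤ peval f x ↔ 0 ≤ peval g x)) ∧
    ∀ (L : MFun n) (x : Rn n), PosOn 1 D L →
      PosOn (ballPoly u δ) D L → L 1 = 1 → (∀ i, L (X i) = x i) → L g ≤ peval g x

lemma Good.mono_deg {n : ℕ} {f : MvPolynomial (Fin n) ℝ} {u : Rn n} {g : MvPolynomial (Fin n) ℝ}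
    {D D' : ℕ} {δ : ℝ} (h : Good f u g D δ) (hD : D ≤ D') : Good f u g D' δ :=
  ⟨h.1, fun L x h1 h2 => h.2 L x (h1.mono hD) (h2.mono hD)⟩

lemma exists_pos_ball {n : ℕ} (f : MvPolynomial (Fin n) ℝ) (u : Rn n) (hf : 0 < peval f u) :
    ∃ δ₀ > 0, ∀ x ∈ closedBall u δ₀, 0 < peval f x := by
  have h := (peval_continuous f).continuousAt.eventually (lt_mem_nhds hf)
  obtain ⟨δ, hδ, h⟩ := Metric.nhds_basis_closedBall.mem_iff.1 h
  exact ⟨δ, hδ, fun x hx => h hx⟩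

lemma exists_good {n : ℕ} (f : MvPolynomial (Fin n) ℝ) (u : Rn n) (h0 : 0 ≤ peval f u)
    (h : peval f u = 0 → SosConcave f ∨ StrictlyQuasiConcaveAt f u) :
    ∃ (g : MvPolynomial (Fin n) ℝ) (D : ℕ), ∃ δ₀ > 0, ∀ δ, 0 < δ → δ ≤ δ₀ → Good f u g D δ := by
  rcases h0.lt_or_eq with h1 | h1
  · obtain ⟨δ₀, hδ, hp⟩ := exists_pos_ball f u h1
    refine ⟨1, 0, δ₀, hδ, fun δ _ hδ' => ⟨fun x hx => ?_, fun L x _ _ h1 _ => ?_⟩⟩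
    · have := hp x (closedBall_subset_closedBall hδ' hx)
      simp [peval] at *
      exact this.le
    · rw [h1]; simp [peval]
  rcases h h1.symm with h2 | h2
  · obtain ⟨D, hD⟩ := sosConcave_jensen f h2
    exact ⟨f, D, 1, one_pos, fun δ _ _ => ⟨fun x _ => Iff.rfl, fun L x a _ b c => hD L x a b c⟩⟩
  · obtain ⟨M, hM, μ, hμ, hb⟩ := finsler (pgrad f u) (phess f u) (by
      rcases h2 with h2 | ⟨h2, h3⟩
      · exact h2.2
      · intro v hv _
        have := (Matrix.posDef_iff_dotProduct_mulVec.1 h3).2 hv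
        simp only [dotProduct, Matrix.mulVec, star_trivial, Finset.mul_sum, Matrix.neg_apply,
          neg_mul, mul_neg, Finset.sum_neg_distrib] at this
        simpa only [mul_assoc] using this)
    let g := f - C (M / 2) * f ^ 2
    have hu : MvPolynomial.eval (fun i => u i) f = 0 := h1.symm
    have hpd : ∀ i j, peval (pderiv j (pderiv i g)) u =
        phess f u j i - M * (pgrad f u i * pgrad f u j) := by
      intro i j
      simp only [g, peval, phess, pgrad, Matrix.of_apply, map_sub, pow_two,
        Derivation.leibniz, map_add, map_mul, smul_eq_mul, eval_C, hu]
      ring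
    obtain ⟨δ₁, hδ₁, D, hD⟩ := strict_jensen g u μ hμ (by
      intro v
      refine (hb v).trans (le_of_eq ?_)
      simp only [hpd, mul_sub, Finset.sum_sub_distrib]
      rw [pow_two, Finset.sum_mul_sum, Finset.mul_sum, neg_sub, sub_eq_add_neg, add_comm]
      congr 1
      · refine Finset.sum_congr rfl fun i _ => ?_
        rw [Finset.mul_sum]
        exact Finset.sum_congr rfl fun j _ => by ring
      · rw [Finset.sum_comm]
        congr 1
        exact Finset.sum_congr rfl fun i _ => Finset.sum_congr rfl fun j _ => by ring)
    obtain ⟨δ₂, hδ₂, hp⟩ := exists_pos_ball (1 - C (M / 2) * f) u (by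
      simp [peval, hu])
    refine ⟨g, D, min δ₁ δ₂, lt_min hδ₁ hδ₂, fun δ h0 hδ => ⟨fun x hx => ?_, ?_⟩⟩
    · have h3 := hp x (closedBall_subset_closedBall (hδ.trans (min_le_right _ _)) hx)
      have e : peval g x = peval f x * peval (1 - C (M / 2) * f) x := by
        simp only [g, peval, map_sub, map_mul, map_pow, map_one]; ring
      rw [e, mul_nonneg_iff_of_pos_right h3]
    · exact hD δ h0 (hδ.trans (min_le_left _ _))

lemma exists_good_all {n m : ℕ} (f : Fin m → MvPolynomial (Fin n) ℝ) (u : Rn n)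
    (h0 : ∀ i, 0 ≤ peval (f i) u)
    (h : ∀ i, peval (f i) u = 0 → SosConcave (f i) ∨ StrictlyQuasiConcaveAt (f i) u) :
    ∃ (g : Fin m → MvPolynomial (Fin n) ℝ) (D : ℕ), ∃ δ > 0, ∀ i, Good (f i) u (g i) D δ := by
  choose g D δ hδ hg using fun i => exists_good (f i) u (h0 i) (h i)
  obtain ⟨d, hd, hdm⟩ : ∃ d > 0, ∀ i, d ≤ δ i := by
    rcases isEmpty_or_nonempty (Fin m) with hm | hm
    · exact ⟨1, one_pos, fun i => hm.elim i⟩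
    · obtain ⟨i, hi⟩ := Finite.exists_min δ
      exact ⟨δ i, hδ i, hi⟩
  exact ⟨g, Finset.univ.sup D, d, hd, fun i =>
    (hg i d hd (hdm i)).mono_deg (Finset.le_sup (Finset.mem_univ i))⟩

/-! ### Part 5: the cones and the assembly -/

/-- The moment cone attached to a local piece. -/
def MCone {n m : ℕ} (u : Rn n) (δ : ℝ) (g : Fin m → MvPolynomial (Fin n) ℝ) (D : ℕ)
    (L : MFun n) : Prop :=
  PosOn 1 (D + 1) L ∧ PosOn (ballPoly u δ) (D + 1) L ∧ ∀ i, 0 ≤ L (g i)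

lemma PosOn.add {n : ℕ} {q : MvPolynomial (Fin n) ℝ} {D : ℕ} {L L' : MFun n}
    (h : PosOn q D L) (h' : PosOn q D L') : PosOn q D (L + L') := fun p hp => by
  rw [LinearMap.add_apply]; exact add_nonneg (h p hp) (h' p hp)

lemma PosOn.smul {n : ℕ} {q : MvPolynomial (Fin n) ℝ} {D : ℕ} {L : MFun n} {c : ℝ} (hc : 0 ≤ c)
    (h : PosOn q D L) : PosOn q D (c • L) := fun p hp => by
  rw [LinearMap.smul_apply]; exact mul_nonneg hc (h p hp)

lemma MCone.add {n m : ℕ} {u : Rn n} {δ : ℝ} {g : Fin m → MvPolynomial (Fin n) ℝ} {D : ℕ}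
    {L L' : MFun n} (h : MCone u δ g D L) (h' : MCone u δ g D L') : MCone u δ g D (L + L') :=
  ⟨h.1.add h'.1, h.2.1.add h'.2.1, fun i => by
    rw [LinearMap.add_apply]; exact add_nonneg (h.2.2 i) (h'.2.2 i)⟩

lemma MCone.smul {n m : ℕ} {u : Rn n} {δ : ℝ} {g : Fin m → MvPolynomial (Fin n) ℝ} {D : ℕ}
    {L : MFun n} {c : ℝ} (hc : 0 ≤ c) (h : MCone u δ g D L) : MCone u δ g D (c • L) :=
  ⟨h.1.smul hc, h.2.1.smul hc, fun i => by
    rw [LinearMap.smul_apply]; exact mul_nonneg hc (h.2.2 i)⟩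

lemma MCone.zero {n m : ℕ} {u : Rn n} {δ : ℝ} {g : Fin m → MvPolynomial (Fin n) ℝ} {D : ℕ} :
    MCone u δ g D 0 := by
  refine ⟨fun p _ => ?_, fun p _ => ?_, fun i => ?_⟩ <;> simp

/-- evaluation as a linear functional -/
def evalFun {n : ℕ} (x : Rn n) : MFun n := (MvPolynomial.aeval (fun i => x i)).toLinearMap

lemma evalFun_apply {n : ℕ} (x : Rn n) (p : MvPolynomial (Fin n) ℝ) :
    evalFun x p = peval p x := by
  simp [evalFun, peval, MvPolynomial.aeval_eq_eval]

lemma ballPoly_nonneg {n : ℕ} {u x : Rn n} {δ : ℝ} (hx : x ∈ closedBall u δ) :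
    0 ≤ peval (ballPoly u δ) x := by
  rw [mem_closedBall, EuclideanSpace.dist_eq] at hx
  have h := (Real.sqrt_le_iff.1 hx).2
  simp only [Real.dist_eq, sq_abs] at h
  simp only [peval, ballPoly, map_sub, map_sum, map_pow, eval_C, eval_X]
  linarith

lemma MCone.eval {n m : ℕ} {u : Rn n} {δ : ℝ} {f g : Fin m → MvPolynomial (Fin n) ℝ} {D : ℕ}
    (hg : ∀ i, Good (f i) u (g i) D δ) {x : Rn n} (hf : ∀ i, 0 ≤ peval (f i) x)
    (hx : x ∈ closedBall u δ) : MCone u δ g D (evalFun x) := by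
  refine ⟨fun p _ => ?_, fun p _ => ?_, fun i => ?_⟩ <;> rw [evalFun_apply]
  · simp only [peval, one_mul, map_pow]; positivity
  · have h := ballPoly_nonneg hx
    simp only [peval, map_mul, map_pow] at *
    positivity
  · exact ((hg i).1 x hx).1 (hf i)

lemma MCone.mean {n m : ℕ} {u : Rn n} {δ : ℝ} {f g : Fin m → MvPolynomial (Fin n) ℝ} {D : ℕ}
    (hδ : 0 < δ) (hg : ∀ i, Good (f i) u (g i) D δ) {L : MFun n} (hL : MCone u δ g D L)
    (h1 : L 1 = 1) {x : Rn n} (hX : ∀ i, L (X i) = x i) :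
    (∀ i, 0 ≤ peval (f i) x) ∧ x ∈ closedBall u δ := by
  have hb : x ∈ closedBall u δ := mean_in_ball hδ.le hL.1 (hL.2.1.mono (by omega)) h1 hX
  refine ⟨fun i => ((hg i).1 x hb).2 ((hL.2.2 i).trans ?_), hb⟩
  exact (hg i).2 L x (hL.1.mono (by omega)) (hL.2.1.mono (by omega)) h1 hX

lemma MCone.one_nonneg {n m : ℕ} {u : Rn n} {δ : ℝ} {g : Fin m → MvPolynomial (Fin n) ℝ} {D : ℕ}
    {L : MFun n} (hL : MCone u δ g D L) : 0 ≤ L 1 := by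
  simpa using hL.1.sq (p := 1) (by simp)

lemma MCone.eq_zero {n m : ℕ} {u : Rn n} {δ : ℝ} {g : Fin m → MvPolynomial (Fin n) ℝ} {D : ℕ}
    {L : MFun n} (hL : MCone u δ g D L) (h : L 1 = 0) (i : Fin n) : L (X i) = 0 := by
  have key : ∀ t : ℝ, 0 ≤ L (X i ^ 2) - 2 * t * L (X i) := by
    intro t
    have h1 := hL.1.sq (p := X i - C t) ((Z_deg _ _).trans (by omega))
    have e : (X i - C t : MvPolynomial (Fin n) ℝ) ^ 2 =
        X i ^ 2 - C (2 * t) * X i + C (t ^ 2) * 1 := by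
      simp only [map_mul, map_pow, map_ofNat]; ring
    rw [e, map_add, map_sub, map_C_mul, map_C_mul, h] at h1
    linarith
  by_contra hne
  have h1 := key ((L (X i ^ 2) + 1) / (2 * L (X i)))
  have : 2 * ((L (X i ^ 2) + 1) / (2 * L (X i))) * L (X i) = L (X i ^ 2) + 1 := by
    field_simp
  rw [this] at h1
  linarith

/-- the lifted set -/
def liftSet {n m : ℕ} {κ : Type} [Fintype κ] (u : κ → Rn n) (δ : κ → ℝ)
    (g : κ → Fin m → MvPolynomial (Fin n) ℝ) (D : κ → ℕ) : Set (Rn n) :=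
  {x | ∃ L : κ → MFun n, (∀ k, MCone (u k) (δ k) (g k) (D k) (L k)) ∧ ∑ k, L k 1 = 1 ∧
    ∀ i, ∑ k, L k (X i) = x i}

lemma liftSet_sdp {n m : ℕ} {κ : Type} [Fintype κ] (u : κ → Rn n) (δ : κ → ℝ)
    (g : κ → Fin m → MvPolynomial (Fin n) ℝ) (D : κ → ℕ) :
    IsSDPRepresentable (liftSet u δ g D) := by
  classical
  unfold liftSet
  have ev : ∀ (k : κ) (p : MvPolynomial (Fin n) ℝ),
      ∃ φ : (κ → MFun n) →ₗ[ℝ] ℝ, ∀ L, φ L = L k p := fun k p =>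
    ⟨{ toFun := fun L => L k p
       map_add' := fun _ _ => rfl
       map_smul' := fun _ _ => rfl }, fun _ => rfl⟩
  have evs : ∀ (p : MvPolynomial (Fin n) ℝ),
      ∃ φ : (κ → MFun n) →ₗ[ℝ] ℝ, ∀ L, φ L = ∑ k, L k p := fun p =>
    ⟨{ toFun := fun L => ∑ k, L k p
       map_add' := fun _ _ => by simp [Finset.sum_add_distrib]
       map_smul' := fun _ _ => by simp [Finset.mul_sum] }, fun _ => rfl⟩
  apply IsLMI.sdp
  refine IsLMI.and (IsLMI.forall fun k => IsLMI.and ?_ (IsLMI.and ?_ (IsLMI.forall fun i => ?_)))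
    (IsLMI.and ?_ (IsLMI.forall fun i => ?_))
  · exact IsLMI.moment (LinearMap.proj (φ := fun _ : κ => MFun n) k) 1 (D k + 1)
  · exact IsLMI.moment (LinearMap.proj (φ := fun _ : κ => MFun n) k) _ (D k + 1)
  · obtain ⟨φ, hφ⟩ := ev k (g k i)
    refine (IsLMI.linear 0 0 φ).congr fun x L => ?_
    simp [hφ]
  · obtain ⟨φ, hφ⟩ := evs 1
    refine (IsLMI.linear_eq (-1) 0 φ).congr fun x L => ?_
    simp only [hφ, Pi.zero_apply, mul_zero, Finset.sum_const_zero, add_zero]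
    constructor <;> intro h <;> linarith
  · obtain ⟨φ, hφ⟩ := evs (X i)
    refine (IsLMI.linear_eq 0 (Pi.single i (-1)) φ).congr fun x L => ?_
    have : ∑ j, x j * (Pi.single i (-1) : Fin n → ℝ) j = - x i := by
      simp [Pi.single_apply]
    rw [this, hφ]
    constructor <;> intro h <;> linarith

lemma liftSet_convex {n m : ℕ} {κ : Type} [Fintype κ] (u : κ → Rn n) (δ : κ → ℝ)
    (g : κ → Fin m → MvPolynomial (Fin n) ℝ) (D : κ → ℕ) : Convex ℝ (liftSet u δ g D) := by
  rintro x ⟨L, hL, hL1, hLX⟩ y ⟨L', hL', hL1', hLX'⟩ a b ha hb hab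
  refine ⟨fun k => a • L k + b • L' k, fun k => ((hL k).smul ha).add ((hL' k).smul hb), ?_, ?_⟩
  · simp only [LinearMap.add_apply, LinearMap.smul_apply, smul_eq_mul, Finset.sum_add_distrib,
      ← Finset.mul_sum, hL1, hL1']
    linarith
  · intro i
    simp only [LinearMap.add_apply, LinearMap.smul_apply, smul_eq_mul, Finset.sum_add_distrib,
      ← Finset.mul_sum, hLX, hLX']
    simp

lemma mem_liftSet {n m : ℕ} {κ : Type} [Fintype κ] {u : κ → Rn n} {δ : κ → ℝ}
    {f : Fin m → MvPolynomial (Fin n) ℝ}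
    {g : κ → Fin m → MvPolynomial (Fin n) ℝ} {D : κ → ℕ}
    (hg : ∀ k i, Good (f i) (u k) (g k i) (D k) (δ k)) {x : Rn n} (hf : ∀ i, 0 ≤ peval (f i) x)
    (k : κ) (hx : x ∈ closedBall (u k) (δ k)) : x ∈ liftSet u δ g D := by
  classical
  have key : ∀ p : MvPolynomial (Fin n) ℝ,
      ∑ k', (if k' = k then evalFun x else (0 : MFun n)) p = peval p x := by
    intro p
    rw [Finset.sum_eq_single k]
    · simp [evalFun_apply]
    · intro b _ hb; simp [hb]
    · simp
  refine ⟨fun k' => if k' = k then evalFun x else 0, fun k' => ?_, ?_, fun i => ?_⟩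
  · by_cases h : k' = k
    · subst h; simpa using MCone.eval (hg k') hf hx
    · simpa [h] using MCone.zero
  · rw [key]; simp [peval]
  · rw [key]; simp [peval]

lemma liftSet_subset {n m : ℕ} {κ : Type} [Fintype κ] {u : κ → Rn n} {δ : κ → ℝ}
    {f : Fin m → MvPolynomial (Fin n) ℝ}
    {g : κ → Fin m → MvPolynomial (Fin n) ℝ} {D : κ → ℕ} (hδ : ∀ k, 0 < δ k)
    (hg : ∀ k i, Good (f i) (u k) (g k i) (D k) (δ k)) :
    liftSet u δ g D ⊆ convexHull ℝ {x : Rn n | ∀ i, 0 ≤ peval (f i) x} := by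
  classical
  rintro x ⟨L, hL, h1, hX⟩
  let y : κ → Rn n := fun k => WithLp.toLp 2 (fun i => (L k 1)⁻¹ * L k (X i))
  have hxy : x = ∑ k ∈ Finset.univ.filter (fun k => L k 1 ≠ 0), L k 1 • y k := by
    ext i
    rw [← hX i, WithLp.ofLp_sum, Finset.sum_apply, Finset.sum_filter]
    refine Finset.sum_congr rfl fun k _ => ?_
    by_cases h : L k 1 = 0
    · simp [h, (hL k).eq_zero h i]
    · simp [h, y]
  rw [hxy]
  refine (convex_convexHull ℝ _).sum_mem (fun k _ => (hL k).one_nonneg) ?_ ?_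
  · rw [← h1, Finset.sum_filter_ne_zero]
  · intro k hk
    have hk' : L k 1 ≠ 0 := (Finset.mem_filter.1 hk).2
    have h0 : 0 ≤ (L k 1)⁻¹ := inv_nonneg.2 (hL k).one_nonneg
    refine subset_convexHull ℝ _ ?_
    exact (MCone.mean (hδ k) (hg k) ((hL k).smul h0) (by simp [hk'])
      (x := y k) (fun i => by simp [y])).1

lemma isCompact_convexJoin {n : ℕ} {A B : Set (Rn n)} (hA : IsCompact A) (hB : IsCompact B) :
    IsCompact (convexJoin ℝ A B) := by
  have : convexJoin ℝ A B = (fun p : ℝ × Rn n × Rn n => (1 - p.1) • p.2.1 + p.1 • p.2.2) ''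
      (Icc 0 1 ×ˢ A ×ˢ B) := by
    ext x
    simp only [mem_convexJoin, segment_eq_image, mem_image, mem_prod, Prod.exists]
    constructor
    · rintro ⟨a, ha, b, hb, t, ht, rfl⟩
      exact ⟨t, a, b, ⟨ht, ha, hb⟩, rfl⟩
    · rintro ⟨t, a, b, ⟨ht, ha, hb⟩, rfl⟩
      exact ⟨a, ha, b, hb, t, ht, rfl⟩
  rw [this]
  exact (isCompact_Icc.prod (hA.prod hB)).image (by fun_prop)

lemma isCompact_hull_union {n : ℕ} {κ : Type} (s : Finset κ) (A : κ → Set (Rn n))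
    (hA : ∀ k, IsCompact (A k)) (hc : ∀ k, Convex ℝ (A k)) :
    IsCompact (convexHull ℝ (⋃ k ∈ s, A k)) := by
  classical
  induction s using Finset.induction_on with
  | empty => simp
  | insert a s ha ih =>
    rw [Finset.set_biUnion_insert]
    rcases (A a).eq_empty_or_nonempty with h | h
    · simpa [h] using ih
    rcases (⋃ k ∈ s, A k).eq_empty_or_nonempty with h' | h'
    · rw [h', union_empty, (hc a).convexHull_eq]; exact hA a
    · rw [convexHull_union h h', (hc a).convexHull_eq]
      exact isCompact_convexJoin (hA a) ih

lemma isCompact_convexBoundary {n : ℕ} {T : Set (Rn n)} (hT : IsCompact T) :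
    IsCompact (convexBoundary T) := by
  have : convexBoundary T = Prod.fst '' ((T ×ˢ sphere (0 : Rn n) 1) ∩
      {p : Rn n × Rn n | ∀ x ∈ T, (∑ i, p.2 i * p.1 i) ≤ ∑ i, p.2 i * x i}) := by
    ext x
    simp only [convexBoundary, mem_image, Prod.exists, exists_and_right, exists_eq_right]
    constructor
    · rintro ⟨h1, l, h2, h3⟩
      exact ⟨l, ⟨h1, by simpa using h2⟩, h3⟩
    · rintro ⟨l, ⟨h1, h2⟩, h3⟩
      exact ⟨h1, l, by simpa using h2, h3⟩
  rw [this]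
  refine ((hT.prod (isCompact_sphere _ _)).inter_right ?_).image continuous_fst
  have e : {p : Rn n × Rn n | ∀ x ∈ T, (∑ i, p.2 i * p.1 i) ≤ ∑ i, p.2 i * x i} =
      ⋂ x ∈ T, {p : Rn n × Rn n | (∑ i, p.2 i * p.1 i) ≤ ∑ i, p.2 i * x i} := by
    ext p; simp
  rw [e]
  exact isClosed_biInter fun x _ => isClosed_le (by fun_prop) (by fun_prop)

lemma exists_minimizer {n : ℕ} {T : Set (Rn n)} (hT : IsCompact T) (hne : T.Nonempty) (l : Rn n)
    (hl : l ≠ 0) : ∃ u ∈ convexBoundary T, ∀ x ∈ T, (∑ i, l i * u i) ≤ ∑ i, l i * x i := by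
  obtain ⟨u, hu, hmin⟩ := hT.exists_isMinOn hne
    (f := fun x : Rn n => ∑ i, l i * x i) (by fun_prop)
  refine ⟨u, ⟨hu, ‖l‖⁻¹ • l, norm_smul_inv_norm hl, fun x hx => ?_⟩, fun x hx => hmin hx⟩
  have h := mul_le_mul_of_nonneg_left (a := ‖l‖⁻¹) (show _ ≤ _ from hmin hx)
    (inv_nonneg.2 (norm_nonneg l))
  simpa [Finset.mul_sum, mul_assoc] using h

lemma subset_of_boundary {n : ℕ} (hn : 0 < n) {T P : Set (Rn n)} (hT : IsCompact T)
    (hP : IsCompact P) (hc : Convex ℝ P) (h : convexBoundary T ⊆ P) : T ⊆ P := by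
  intro x hx
  by_contra hxP
  have hPne : P.Nonempty := by
    have : (EuclideanSpace.single (⟨0, hn⟩ : Fin n) (1 : ℝ)) ≠ 0 := by
      intro h0
      have := congrArg norm h0
      simp at this
    obtain ⟨u, hu, _⟩ := exists_minimizer hT ⟨x, hx⟩ _ this
    exact ⟨u, h hu⟩
  obtain ⟨φ, c, h1, h2⟩ := geometric_hahn_banach_point_closed hc hP.isClosed hxP
  let l : Rn n := (InnerProductSpace.toDual ℝ (Rn n)).symm φ
  have hl : ∀ y : Rn n, φ y = ∑ i, l i * y i := by
    intro y
    have := InnerProductSpace.toDual_symm_apply (𝕜 := ℝ) (x := y) (y := φ)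
    rw [← this, PiLp.inner_apply]
    exact Finset.sum_congr rfl fun i _ => by simp [l, mul_comm]
  have hl0 : l ≠ 0 := by
    intro h0
    obtain ⟨p, hp⟩ := hPne
    have a1 := h2 p hp
    rw [hl, h0] at a1 h1
    simp at a1 h1
    linarith
  obtain ⟨v, hv, hmin⟩ := exists_minimizer hT ⟨x, hx⟩ l hl0
  have a1 := h2 v (h hv)
  have a2 := hmin x hx
  rw [← hl, ← hl] at a2
  linarith

lemma sdp_zero_dim (S : Set (Rn 0)) : IsSDPRepresentable S := by
  rcases S.eq_empty_or_nonempty with h | h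
  · have := (IsLMI.linear (n := 0) (-1) 0 (0 : ℝ →ₗ[ℝ] ℝ)).sdp
    convert this
    rw [h]; ext x; simp
  · have := (IsLMI.true (n := 0) (V := ℝ)).sdp
    convert this
    rw [Subsingleton.eq_univ_of_nonempty h]; ext x; simp

/-- sufficient conditions for SDP representability of the convex hull
of a compact basic closed semialgebraic set with interior near the convex boundary. -/
theorem isSDPRepresentable_convexHull_basic {n m : ℕ}
    (f : Fin m → MvPolynomial (Fin n) ℝ) (T : Set (Rn n))
    (hT : T = {x : Rn n | ∀ i, 0 ≤ peval (f i) x})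
    (hcpt : IsCompact T)
    (hint : ∀ u ∈ convexBoundary T, ∀ δ > 0, ∃ v ∈ ball u δ, ∀ i, 0 < peval (f i) v)
    (h : ∀ u ∈ convexBoundary T, ∀ i, peval (f i) u = 0 →
      SosConcave (f i) ∨ StrictlyQuasiConcaveAt (f i) u) :
    IsSDPRepresentable (convexHull ℝ T) := by

  rcases Nat.eq_zero_or_pos n with rfl | hn
  · exact sdp_zero_dim _
  have hfT : ∀ x, x ∈ T ↔ ∀ i, 0 ≤ peval (f i) x := fun x => by rw [hT]; rfl
  choose! g D δ hδ hg using fun (u : Rn n) (hu : u ∈ convexBoundary T) =>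
    exists_good_all f u ((hfT u).1 hu.1) (h u hu)
  obtain ⟨t, htB, hcov⟩ := (isCompact_convexBoundary hcpt).elim_nhds_subcover
    (fun u => closedBall u (δ u)) (fun u hu => closedBall_mem_nhds u (hδ u hu))
  let κ : Type := {x // x ∈ t}
  let S := liftSet (κ := κ) (fun k => k.1) (fun k => δ k.1) (fun k => g k.1) (fun k => D k.1)
  have hδ' : ∀ k : κ, 0 < δ k.1 := fun k => hδ _ (htB _ k.2)
  have hg' : ∀ (k : κ) i, Good (f i) k.1 (g k.1 i) (D k.1) (δ k.1) := fun k => hg _ (htB _ k.2)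
  let A : κ → Set (Rn n) := fun k => T ∩ closedBall k.1 (δ k.1)
  have hAc : ∀ k, IsCompact (A k) := fun k => hcpt.inter_right isClosed_closedBall
  have hAconv : ∀ k, Convex ℝ (A k) := by
    intro k x hx y hy a b ha hb hab
    have h1 := MCone.eval (hg' k) ((hfT x).1 hx.1) hx.2
    have h2 := MCone.eval (hg' k) ((hfT y).1 hy.1) hy.2
    have h3 := MCone.mean (hδ' k) (hg' k) ((h1.smul ha).add (h2.smul hb))
      (by simp [evalFun_apply, peval, hab]) (x := a • x + b • y)
      (fun i => by simp [evalFun_apply, peval])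
    exact ⟨(hfT _).2 h3.1, h3.2⟩
  have hTsub : T ⊆ convexHull ℝ (⋃ k ∈ (Finset.univ : Finset κ), A k) := by
    refine subset_of_boundary hn hcpt (isCompact_hull_union _ A hAc hAconv)
      (convex_convexHull ℝ _) fun u hu => subset_convexHull ℝ _ ?_
    obtain ⟨v, hv, huv⟩ := mem_iUnion₂.1 (hcov hu)
    exact mem_iUnion₂.2 ⟨⟨v, hv⟩, Finset.mem_univ _, hu.1, huv⟩
  have hS : convexHull ℝ T = S := by
    apply Subset.antisymm
    · refine convexHull_min (hTsub.trans (convexHull_min ?_ (liftSet_convex _ _ _ _)))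
        (liftSet_convex _ _ _ _)
      refine iUnion₂_subset fun k _ x hx => ?_
      exact mem_liftSet (κ := κ) hg' ((hfT x).1 hx.1) k hx.2
    · rw [hT]
      exact liftSet_subset hδ' hg'
  rw [hS]
  exact liftSet_sdp _ _ _ _
end
end

section
/- Let T = ⋃_{k=1}^L Tₖ be a compact set, where each Tₖ = { x ∈ ℝⁿ : fᵏ₁(x) ≥ 0, …, fᵏ_{mₖ}(x) ≥ 0 } is defined by real polynomials fᵏᵢ, and assume conv(T) is SDP representable. Let u ∈ ∂_cT ∩ ∂Tₖ with fᵏᵢ(u) = 0. If fᵏᵢ is nonsingular at u (i.e., ∇fᵏᵢ(u) ≠ 0) and irredundant at u with respect to ∂conv(T), then fᵏᵢ is quasi-concave at u. -/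
open MvPolynomial Metric Set Pointwise Filter

noncomputable section

/-- The restriction of `g` to the line `t ↦ w + t v`, as a univariate polynomial. -/
def linePoly {n : ℕ} (w : Rn n) (v : Fin n → ℝ) (g : MvPolynomial (Fin n) ℝ) : Polynomial ℝ :=
  MvPolynomial.aeval (fun i => Polynomial.C (w i) + Polynomial.C (v i) * Polynomial.X) g

lemma linePoly_eval {n : ℕ} (w : Rn n) (v : Fin n → ℝ) (g : MvPolynomial (Fin n) ℝ) (t : ℝ) :
    (linePoly w v g).eval t = MvPolynomial.eval (fun i => w i + v i * t) g := by
  unfold linePoly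
  induction g using MvPolynomial.induction_on with
  | C a => simp
  | add p q hp hq => simp [hp, hq]
  | mul_X p i hp => simp [hp]

lemma linePoly_derivative {n : ℕ} (w : Rn n) (v : Fin n → ℝ) (g : MvPolynomial (Fin n) ℝ) :
    Polynomial.derivative (linePoly w v g) =
      ∑ i, Polynomial.C (v i) * linePoly w v (MvPolynomial.pderiv i g) := by
  unfold linePoly
  induction g using MvPolynomial.induction_on with
  | C a => simp
  | add p q hp hq => simp [hp, hq, mul_add, Finset.sum_add_distrib]
  | mul_X p i hp =>
    have key : ∀ j, Polynomial.C (v j) * (MvPolynomial.aeval fun i => Polynomial.C (w i) +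
          Polynomial.C (v i) * Polynomial.X) (MvPolynomial.pderiv j (p * MvPolynomial.X i)) =
        (if j = i then Polynomial.C (v i) * (MvPolynomial.aeval fun i => Polynomial.C (w i) +
          Polynomial.C (v i) * Polynomial.X) p else 0) +
        Polynomial.C (v j) * (MvPolynomial.aeval fun i => Polynomial.C (w i) +
          Polynomial.C (v i) * Polynomial.X) (MvPolynomial.pderiv j p) *
          (Polynomial.C (w i) + Polynomial.C (v i) * Polynomial.X) := by
      intro j
      by_cases h : j = i
      · subst h
        simp only [Derivation.leibniz, smul_eq_mul, map_add, map_mul, MvPolynomial.aeval_X,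
          MvPolynomial.pderiv_X_self, map_one, if_true]
        ring
      · simp only [Derivation.leibniz, smul_eq_mul, map_add, map_mul, MvPolynomial.aeval_X,
          MvPolynomial.pderiv_X_of_ne (Ne.symm h), map_zero, if_neg h]
        ring
    simp only [key, Finset.sum_add_distrib, ← Finset.sum_mul, Finset.sum_ite_eq',
      Finset.mem_univ, if_true]
    rw [map_mul, MvPolynomial.aeval_X, Polynomial.derivative_mul, hp]
    simp only [Polynomial.derivative_add, Polynomial.derivative_C, Polynomial.derivative_C_mul,
      Polynomial.derivative_X]
    ring

/-- A univariate polynomial with a nondegenerate minimum `0` at `0` is positive nearby. -/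
lemma pos_near_of_second {p : Polynomial ℝ} (h0 : p.eval 0 = 0)
    (h1 : p.derivative.eval 0 = 0) (h2 : 0 < p.derivative.derivative.eval 0) :
    ∀ᶠ t in nhds (0 : ℝ), t ≠ 0 → 0 < p.eval t := by
  rw [← Polynomial.coeff_zero_eq_eval_zero] at h0 h1 h2
  simp only [Polynomial.coeff_derivative] at h1 h2
  norm_num at h1 h2
  obtain ⟨q, rfl⟩ : Polynomial.X ^ 2 ∣ p := by
    rw [Polynomial.X_pow_dvd_iff]
    intro d hd
    interval_cases d <;> assumption
  have hq : 0 < q.eval 0 := by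
    have := Polynomial.coeff_X_pow_mul q 2 0
    rw [← Polynomial.coeff_zero_eq_eval_zero, ← this]
    simpa using h2
  filter_upwards [q.continuous.continuousAt.eventually (lt_mem_nhds hq)] with t ht hne
  simp only [Polynomial.eval_mul, Polynomial.eval_pow, Polynomial.eval_X]
  positivity

lemma continuous_eval_Rn {n : ℕ} (g : MvPolynomial (Fin n) ℝ) :
    Continuous (fun x : Rn n => MvPolynomial.eval (fun i => x i) g) :=
  (MvPolynomial.continuous_eval g).comp (by fun_prop)

/-- Quasi-concavity at a nonsingular boundary point of `S = {g ≥ 0}` lying on the boundary of a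
convex set containing `S`. -/
lemma quasiConcaveAt_of_frontier {n m : ℕ} (g : Fin m → MvPolynomial (Fin n) ℝ)
    (C : Set (Rn n)) (hC : Convex ℝ C) (hsub : {x : Rn n | ∀ i, 0 ≤ peval (g i) x} ⊆ C)
    (i : Fin m) (w : Rn n) (hw : peval (g i) w = 0) (hwC : w ∈ frontier C)
    (hpos : ∀ j, j ≠ i → 0 < peval (g j) w) : QuasiConcaveAt (g i) w := by
  intro v hv
  by_contra hcon
  have hpos2 : 0 < ∑ a, ∑ b, v a * phess (g i) w a b * v b := by linarith
  have hopen : IsOpen {x : Rn n | ∀ j, 0 < peval (g j) x} := by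
    rw [ofPred_forall]
    exact isOpen_iInter_of_finite fun j => isOpen_lt continuous_const (continuous_eval_Rn (g j))
  have hint : {x : Rn n | ∀ j, 0 < peval (g j) x} ⊆ interior C :=
    interior_maximal (fun x hx => hsub fun j => (hx j).le) hopen
  let V : Rn n := WithLp.toLp 2 v
  have hline : ∀ᶠ t in nhds (0 : ℝ), t ≠ 0 → w + t • V ∈ interior C := by
    have e1 := pos_near_of_second (p := linePoly w v (g i))
      (by rw [linePoly_eval]; simpa [peval] using hw)
      (by
        rw [linePoly_derivative]
        simp only [Polynomial.eval_finsetSum, Polynomial.eval_mul, Polynomial.eval_C,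
          linePoly_eval]
        simpa [pgrad, mul_comm] using hv)
      (by
        simp only [linePoly_derivative, Polynomial.derivative_sum, Polynomial.derivative_C_mul,
          Polynomial.eval_finsetSum, Polynomial.eval_mul, Polynomial.eval_C, linePoly_eval]
        simp only [mul_zero, add_zero]
        rw [Finset.sum_comm] at hpos2
        convert hpos2 using 2 with a _
        rw [Finset.mul_sum]
        refine Finset.sum_congr rfl fun b _ => ?_
        simp only [phess, Matrix.of_apply]
        ring)
    have e2 : ∀ᶠ t in nhds (0 : ℝ), ∀ j, j ≠ i → 0 < peval (g j) (w + t • V) := by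
      rw [eventually_all]
      intro j
      by_cases hj : j = i
      · simp [hj]
      · have hc : Continuous fun t : ℝ => peval (g j) (w + t • V) :=
          (continuous_eval_Rn (g j)).comp (by fun_prop)
        have := hc.continuousAt (x := 0)
        filter_upwards [this.eventually (lt_mem_nhds (by simpa using hpos j hj))] with t ht _
        exact ht
    filter_upwards [e1, e2] with t h1 h2 hne
    apply hint
    intro j
    by_cases hj : j = i
    · subst hj
      have := h1 hne
      rw [linePoly_eval] at this
      simpa [peval, V, mul_comm] using this
    · exact h2 j hj
  obtain ⟨ε, hε, hball⟩ := Metric.eventually_nhds_iff.1 hline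
  have hp := @hball (ε / 2) (by simp [abs_of_pos hε]; linarith) (by positivity)
  have hm := @hball (-(ε / 2)) (by simp [abs_of_pos hε]; linarith)
    (neg_ne_zero.2 (by positivity))
  have hmid := hC.interior hp hm (a := 1 / 2) (b := 1 / 2) (by norm_num) (by norm_num)
    (by norm_num)
  have : (1 / 2 : ℝ) • (w + (ε / 2) • V) + (1 / 2 : ℝ) • (w + (-(ε / 2)) • V) = w := by
    module
  rw [this] at hmid
  exact hwC.2 hmid

/-- necessary condition for SDP representability of convex hulls —
a nonsingular, irredundant defining polynomial vanishing at `u ∈ ∂_cT ∩ ∂Tₖ`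
is quasi-concave at `u`. -/
theorem quasiConcaveAt_of_sdpRepresentable_convexHull {n L : ℕ}
    (mk : Fin L → ℕ) (f : ∀ k, Fin (mk k) → MvPolynomial (Fin n) ℝ)
    (T : Fin L → Set (Rn n))
    (hT : ∀ k, T k = {x : Rn n | ∀ i, 0 ≤ peval (f k i) x})
    (Tun : Set (Rn n)) (hTun : Tun = ⋃ k, T k) (hcpt : IsCompact Tun)
    (hsdp : IsSDPRepresentable (convexHull ℝ Tun))
    (k : Fin L) (i : Fin (mk k)) (u : Rn n)
    (hu : u ∈ convexBoundary Tun ∩ frontier (T k))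
    (hfu : peval (f k i) u = 0)
    (hns : pgrad (f k i) u ≠ 0)
    (hirr : ∃ w : ℕ → Rn n, Tendsto w atTop (nhds u) ∧
      ∀ N : ℕ, peval (f k i) (w N) = 0 ∧ w N ∈ frontier (convexHull ℝ Tun) ∧
        IsNonsingularBoundaryPoint (f k) (T k) (w N)) :
    QuasiConcaveAt (f k i) u := by
  obtain ⟨w, hwlim, hw⟩ := hirr
  have hclosed : IsClosed (T k) := by
    rw [hT k, ofPred_forall]
    exact isClosed_iInter fun j => isClosed_le continuous_const (continuous_eval_Rn (f k j))
  have hqc : ∀ N, QuasiConcaveAt (f k i) (w N) := by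
    intro N
    obtain ⟨h0, hfr, hfrT, i0, -, -, huniq⟩ := hw N
    have hmem : w N ∈ T k := hclosed.frontier_subset hfrT
    rw [hT k] at hmem
    refine quasiConcaveAt_of_frontier (f k) _ (convex_convexHull ℝ Tun) ?_ i (w N) h0 hfr ?_
    · rw [← hT k]
      refine Subset.trans ?_ (subset_convexHull ℝ Tun)
      rw [hTun]
      exact subset_iUnion T k
    · intro j hj
      refine lt_of_le_of_ne (hmem j) fun h => hj ?_
      rw [huniq j h.symm, huniq i h0]
  intro v hv
  have cg : ∀ a, Continuous fun x : Rn n => pgrad (f k i) x a := fun a => continuous_eval_Rn _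
  have ch : ∀ a b, Continuous fun x : Rn n => phess (f k i) x a b :=
    fun a b => continuous_eval_Rn _
  have hnorm : ∀ x : Rn n, pgrad (f k i) x ≠ 0 → ∑ a, pgrad (f k i) x a ^ 2 ≠ 0 := by
    intro x hx h
    apply hx
    funext a
    have := (Finset.sum_eq_zero_iff_of_nonneg (fun a _ => sq_nonneg _)).1 h a (Finset.mem_univ a)
    simpa using this
  -- projection of `v` on the tangent space at `x`
  let P : Rn n → Fin n → ℝ := fun x a => v a -
    (∑ b, pgrad (f k i) x b * v b) / (∑ b, pgrad (f k i) x b ^ 2) * pgrad (f k i) x a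
  have hPu : P u = v := by
    funext a
    simp [P, hv]
  have cP : ∀ a, ContinuousAt (fun x => P x a) u := by
    intro a
    refine continuousAt_const.sub (ContinuousAt.mul (ContinuousAt.div ?_ ?_ (hnorm u hns))
      (cg a).continuousAt)
    · exact (continuous_finsetSum _ fun b _ => (cg b).mul continuous_const).continuousAt
    · exact (continuous_finsetSum _ fun b _ => (cg b).pow 2).continuousAt
  have cF : ContinuousAt
      (fun x => -(∑ a, ∑ b, P x a * phess (f k i) x a b * P x b)) u := by
    refine ContinuousAt.neg ?_
    refine tendsto_finsetSum _ fun a _ => tendsto_finsetSum _ fun b _ => ?_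
    exact ((cP a).mul (ch a b).continuousAt).mul (cP b)
  have hlim := cF.tendsto.comp hwlim
  rw [hPu] at hlim
  refine ge_of_tendsto' hlim fun N => ?_
  refine hqc N _ ?_
  obtain ⟨h0, -, -, i0, -, hg, huniq⟩ := hw N
  rw [← huniq i h0] at hg
  have hne := hnorm _ hg
  simp only [P, mul_sub, Finset.sum_sub_distrib]
  have : ∀ c : ℝ, ∑ a, pgrad (f k i) (w N) a * (c * pgrad (f k i) (w N) a) =
      c * ∑ a, pgrad (f k i) (w N) a ^ 2 := by
    intro c
    rw [Finset.mul_sum]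
    exact Finset.sum_congr rfl fun a _ => by ring
  rw [this, div_mul_cancel₀ _ hne, sub_self]
end
end
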